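/- If ψ > ψ*(0) := min_{c∈ℝ} F₀(c,1)², then there exists κ̄ > 0 such that P(κ_n(y,X) ≥ κ̄) → 1 as n → ∞; and if ψ ≤ ψ*(0), then for every κ̄ > 0 one has P(κ_n(y,X) ≥ κ̄) → 0 as n → ∞. In other words, the data are linearly separable with a margin bounded away from 0 if and only if ψ > ψ*(0). -/

import Mathlib

open MeasureTheory ProbabilityTheory Real Filter Set Topology

noncomputable section

namespace MaxMargin

/-- The standard Gaussian measure on `ℝ`. -/
def stdG : Measure ℝ := gaussianReal 0 1

/-- The function `F_κ(c₁,c₂) = (E[((κ − c₁·Y·G − c₂·Z)₊)²])^{1/2}` where `G, Z` are independent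
standard Gaussians and, conditionally on `G`, `Y ∈ {+1,−1}` with `P(Y = +1 | G) = f(G)`. -/
def Fk (f : ℝ → ℝ) (κ c₁ c₂ : ℝ) : ℝ :=
  Real.sqrt (∫ g, ∫ z,
    (f g * (max (κ - c₁ * g - c₂ * z) 0) ^ 2
      + (1 - f g) * (max (κ + c₁ * g - c₂ * z) 0) ^ 2) ∂stdG ∂stdG)

/-- Non-degeneracy of `f`: the variable `T = Y·G` satisfies `P(T < x) > 0` and `P(T > x) > 0`
for every `x ∈ ℝ`. -/
def NonDeg (f : ℝ → ℝ) : Prop :=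
  ∀ x : ℝ,
    (0 < ∫ g, (f g * (if g < x then (1:ℝ) else 0)
          + (1 - f g) * (if -g < x then (1:ℝ) else 0)) ∂stdG) ∧
    (0 < ∫ g, (f g * (if x < g then (1:ℝ) else 0)
          + (1 - f g) * (if x < -g then (1:ℝ) else 0)) ∂stdG)


/-- Points of `ℝ³` carrying the coordinates `(G, X, W)`. -/
abbrev Pt : Type := ℝ × ℝ × ℝ

/-- First coordinate `G`. -/
def Gc : Pt → ℝ := fun q => q.1

/-- Second coordinate `X`. -/
def Xc : Pt → ℝ := fun q => q.2.1

/-- Third coordinate `W`. -/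
def Wc : Pt → ℝ := fun q => q.2.2

/-- The inner product `⟨h₁,h₂⟩_P = E_P[h₁h₂]`. -/
def ip (P : Measure Pt) (h₁ h₂ : Pt → ℝ) : ℝ := ∫ q, h₁ q * h₂ q ∂P

/-- The norm `‖h‖_P = ⟨h,h⟩_P^{1/2}`. -/
def pnorm (P : Measure Pt) (h : Pt → ℝ) : ℝ := Real.sqrt (ip P h h)

/-- Projection onto the orthogonal complement of `W`: `Π_{W⊥}(h) = h − ⟨h,W⟩_P·W`. -/
def projW (P : Measure Pt) (h : Pt → ℝ) : Pt → ℝ := fun q => h q - ip P h Wc * Wc q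

/-- Partial derivative of `F_κ` in its first argument. -/
def d1F (f : ℝ → ℝ) (κ c₁ c₂ : ℝ) : ℝ := deriv (fun t => Fk f κ t c₂) c₁

/-- Partial derivative of `F_κ` in its second argument. -/
def d2F (f : ℝ → ℝ) (κ c₁ c₂ : ℝ) : ℝ := deriv (fun t => Fk f κ c₁ t) c₂

/-- `ψ*(0) = min_{c ∈ ℝ} F₀(c,1)²`. -/
def psiStar0 (f : ℝ → ℝ) : ℝ := ⨅ c : ℝ, (Fk f 0 c 1) ^ 2

/-- The functional `𝓡_{ψ,κ,P}(h) = ψ^{−1/2}·F_κ(⟨h, X^{1/2}W⟩_P, ‖Π_{W⊥}(X^{1/2}h)‖_P)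
+ ⟨h, X^{1/2}·Π_{W⊥}(G)⟩_P`. -/
def Rfun (f : ℝ → ℝ) (P : Measure Pt) (ψ κ : ℝ) (h : Pt → ℝ) : ℝ :=
  (Real.sqrt ψ)⁻¹ *
      Fk f κ (ip P h (fun q => Real.sqrt (Xc q) * Wc q))
        (pnorm P (projW P (fun q => Real.sqrt (Xc q) * h q)))
    + ip P h (fun q => Real.sqrt (Xc q) * projW P Gc q)

/-- `ζ(P) = ‖X^{−1/2}W‖_P^{−1}`. -/
def zetaP (P : Measure Pt) : ℝ := (pnorm P (fun q => (Real.sqrt (Xc q))⁻¹ * Wc q))⁻¹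

/-- The Euclidean (ℓ²) norm of a finitely-indexed vector. -/
def l2 {ι : Type*} [Fintype ι] (v : ι → ℝ) : ℝ := Real.sqrt (∑ i, v i ^ 2)

/-- The law of a `{+1,−1}`-valued variable taking the value `+1` with probability `q`. -/
def signBer (q : ℝ) : Measure ℝ :=
  ENNReal.ofReal q • Measure.dirac (1 : ℝ) + ENNReal.ofReal (1 - q) • Measure.dirac (-1 : ℝ)

/-- `ν` is the centered Gaussian law on `ℝ^p` with covariance matrix `S`: every linear
functional of `ν` has the corresponding one-dimensional centered Gaussian law
(Cramér–Wold characterization). -/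
def IsCGauss {p : ℕ} (ν : Measure (Fin p → ℝ)) (S : Matrix (Fin p) (Fin p) ℝ) : Prop :=
  ∀ a : Fin p → ℝ, ν.map (fun x => ∑ i, a i * x i)
    = gaussianReal 0 (Real.toNNReal (∑ i, ∑ j, a i * S i j * a j))

/-- Joint law of the i.i.d. data `((xᵢ)ᵢ, (yᵢ)ᵢ)` where `xᵢ ~ ν` and, conditionally on `xᵢ`,
`P(yᵢ = +1 | xᵢ) = f(⟨θ*, xᵢ⟩)`. -/
def dataLaw (n p : ℕ) (f : ℝ → ℝ) (θs : Fin p → ℝ) (ν : Measure (Fin p → ℝ)) :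
    Measure ((Fin n → Fin p → ℝ) × (Fin n → ℝ)) :=
  (Measure.pi fun _ : Fin n => ν).bind fun xs =>
    (Measure.pi fun i : Fin n => signBer (f (∑ j, θs j * xs i j))).map fun ys => (xs, ys)

/-- The maximum margin `κ_n(y,X) = max_{‖θ‖₂=1} min_{i≤n} yᵢ⟨θ,xᵢ⟩`. -/
def margin (n p : ℕ) (xs : Fin n → Fin p → ℝ) (ys : Fin n → ℝ) : ℝ :=
  sSup ((fun θ => ⨅ i : Fin n, ys i * ∑ j, θ j * xs i j) '' {θ : Fin p → ℝ | l2 θ = 1})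

/-- Empirical measure of finitely many points of `ℝ²`. -/
def empMeas (P : ℕ) (pt : Fin P → ℝ × ℝ) : Measure (ℝ × ℝ) :=
  ((P : ENNReal))⁻¹ • ∑ i : Fin P, Measure.dirac (pt i)

/-!
The margin depends on the data only through the products `yᵢ xᵢ`. Writing `x = A g` with
`A Aᵀ = Σ` and `u` for the unit vector along `Aᵀ θ*`, these products are distributed as
`A (Tᵢ u + Π gᵢ)`, where `Tᵢ` has the law of `Y G`, `gᵢ` is an independent standard Gaussian vector
and `Π` is the projection onto `u⊥`. The margin is at least `κ > 0` iff `⟨θ, yᵢ xᵢ⟩ ≥ κ` for some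
unit `θ` and all `i`; by convex duality, it is less than `κ` iff some convex combination of the
`yᵢ xᵢ` has norm less than `κ`. Both events have the form `∃ a, ∀ b, ⟨l, w θ⟩ + d ≤ 0` for a
Gaussian matrix `w` and `θ`, `l`, `d` depending on `(a, b)`.

Gordon's inequality, proved by Gaussian interpolation and integration by parts, bounds
`P(Z ≤ 0)` times the probability of such an event by that of its analogue for
`‖θ‖ ⟨l, h⟩ + ‖l‖ ⟨θ, g⟩`, with standard Gaussian vectors `g` and `h`. The analogue of a small
margin forces `‖Π g‖` to be at most about `‖(-c T - h)₊‖` for every `c`, and that of a margin at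
least `κ` forces `‖(κ' - a T + s h)₊‖ ≤ s ‖g‖` for some bounded `(a, s)` with `s ≥ 0`, where
`κ' = κ / 2`. After division by `√n` the law of large numbers turns these norms into `√ψ`,
`F₀(c, 1)`, `F_κ'(a, s)` and `s √ψ`. The first event is therefore unlikely if `F₀(c, 1)² < ψ` for
some `c`. If `ψ ≤ F₀(c, 1)²` for all `c`, homogeneity of `F` and strict monotonicity in `κ` give
`s √ψ ≤ F₀(a, s) < F_κ'(a, s)`, uniformly on the compact half-disc of admissible `(a, s)`, so the
second event is unlikely.
-/

/-! ### Gaussian integration by parts -/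

section TemperateGrowth

variable {E F : Type*} [NormedAddCommGroup E] [NormedSpace ℝ E] [NormedAddCommGroup F]
  [NormedSpace ℝ F]

lemma hasTemperateGrowth_fderiv {φ : E → F} (hφ : φ.HasTemperateGrowth) :
    (fderiv ℝ φ).HasTemperateGrowth := by
  refine ⟨hφ.1.fderiv_right (mod_cast le_top), fun n => ?_⟩
  simpa only [norm_iteratedFDeriv_fderiv] using hφ.2 (n + 1)

lemma hasTemperateGrowth_clm_apply {D : Type*} [NormedAddCommGroup D] [NormedSpace ℝ D]
    {Φ : D → E →L[ℝ] F} {φ : D → E} (hΦ : Φ.HasTemperateGrowth) (hφ : φ.HasTemperateGrowth) :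
    (fun x => Φ x (φ x)).HasTemperateGrowth :=
  (ContinuousLinearMap.id ℝ (E →L[ℝ] F)).bilinear_hasTemperateGrowth hΦ hφ

lemma hasTemperateGrowth_fderiv_apply {φ : E → F} (hφ : φ.HasTemperateGrowth) (v : E) :
    (fun x => fderiv ℝ φ x v).HasTemperateGrowth :=
  hasTemperateGrowth_clm_apply (hasTemperateGrowth_fderiv hφ) (.const v)

lemma exists_norm_le_of_hasTemperateGrowth {φ : E → F} (hφ : φ.HasTemperateGrowth) :
    ∃ (k : ℕ) (C : ℝ), 0 ≤ C ∧ ∀ x, ‖φ x‖ ≤ C * (1 + ‖x‖) ^ k := by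
  obtain ⟨k, C, hC, h⟩ := hφ.norm_iteratedFDeriv_le_uniform 0
  exact ⟨k, C, hC, fun x => by simpa using h 0 le_rfl x⟩

lemma integrable_one_add_norm_pow [MeasurableSpace E] [BorelSpace E] [CompleteSpace E]
    [SecondCountableTopology E] (μ : Measure E) [IsGaussian μ] (k : ℕ) :
    Integrable (fun x => (1 + ‖x‖) ^ k) μ := by
  have hid : MemLp (fun x : E => x) k μ := IsGaussian.memLp_id μ k (ENNReal.natCast_ne_top k)
  have h : MemLp (fun x : E => 1 + ‖x‖) k μ := (memLp_const (1 : ℝ)).add hid.norm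
  refine h.integrable_norm_pow'.congr (ae_of_all _ fun x => ?_)
  simp only [Real.norm_of_nonneg (by positivity : (0 : ℝ) ≤ 1 + ‖x‖)]

lemma integrable_of_hasTemperateGrowth [MeasurableSpace E] [BorelSpace E] [CompleteSpace E]
    [SecondCountableTopology E] {μ : Measure E} [IsGaussian μ] {φ : E → F}
    (hφ : φ.HasTemperateGrowth) : Integrable φ μ := by
  obtain ⟨k, C, -, h⟩ := exists_norm_le_of_hasTemperateGrowth hφ
  exact ((integrable_one_add_norm_pow μ k).const_mul C).mono'
    hφ.1.continuous.aestronglyMeasurable (ae_of_all _ h)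

end TemperateGrowth

instance : IsProbabilityMeasure stdG := by unfold stdG; infer_instance

instance : IsGaussian stdG := by unfold stdG; infer_instance

lemma stdG_eq_withDensity : stdG = volume.withDensity (gaussianPDF 0 1) :=
  gaussianReal_of_var_ne_zero _ one_ne_zero

lemma integral_stdG (φ : ℝ → ℝ) : ∫ x, φ x ∂stdG = ∫ x, gaussianPDFReal 0 1 x * φ x :=
  integral_gaussianReal_eq_integral_smul one_ne_zero

lemma integrable_stdG_iff {φ : ℝ → ℝ} :
    Integrable φ stdG ↔ Integrable fun x => gaussianPDFReal 0 1 x * φ x := by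
  rw [stdG_eq_withDensity, integrable_withDensity_iff_integrable_smul' (measurable_gaussianPDF 0 1)
    (ae_of_all _ fun x => gaussianPDF_lt_top)]
  simp only [toReal_gaussianPDF, smul_eq_mul]

lemma hasDerivAt_gaussianPDFReal_zero_one (x : ℝ) :
    HasDerivAt (gaussianPDFReal 0 1) (-(gaussianPDFReal 0 1 x * x)) x := by
  have hpdf : gaussianPDFReal 0 1 = fun y : ℝ => (√(2 * π))⁻¹ * rexp (-y ^ 2 / 2) := by
    ext y; simp [gaussianPDFReal]
  rw [hpdf]
  refine (((((hasDerivAt_pow 2 x).neg).div_const 2).exp).const_mul _).congr_deriv ?_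
  simp
  ring

lemma integral_mul_stdG {φ : ℝ → ℝ} (hφ : φ.HasTemperateGrowth) :
    ∫ x, x * φ x ∂stdG = ∫ x, deriv φ x ∂stdG := by
  have hφ' : Integrable (deriv φ) stdG :=
    integrable_of_hasTemperateGrowth (hasTemperateGrowth_fderiv_apply hφ 1)
  have hxφ : Integrable (fun x => x * φ x) stdG :=
    integrable_of_hasTemperateGrowth (by fun_prop)
  have hparts := integral_mul_deriv_eq_deriv_mul_of_integrable (u := φ) (u' := deriv φ)
    (v := gaussianPDFReal 0 1)
    (fun x _ => (hφ.1.differentiable (by simp) x).hasDerivAt)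
    (fun x _ => hasDerivAt_gaussianPDFReal_zero_one x)
    ((integrable_stdG_iff.1 hxφ).neg.congr (ae_of_all _ fun x => by simp; ring))
    ((integrable_stdG_iff.1 hφ').congr (ae_of_all _ fun x => mul_comm _ _))
    ((integrable_stdG_iff.1 (integrable_of_hasTemperateGrowth hφ)).congr
      (ae_of_all _ fun x => mul_comm _ _))
  calc ∫ x, x * φ x ∂stdG = -∫ x, φ x * -(gaussianPDFReal 0 1 x * x) := by
        rw [integral_stdG, ← integral_neg]; congr 1; ext x; ring
    _ = ∫ x, deriv φ x * gaussianPDFReal 0 1 x := by rw [hparts, neg_neg]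
    _ = ∫ x, deriv φ x ∂stdG := by rw [integral_stdG]; simp_rw [mul_comm]

lemma measurePreserving_update {ι : Type*} [Fintype ι] [DecidableEq ι] {X : ι → Type*}
    [∀ i, MeasurableSpace (X i)] (μ : ∀ i, Measure (X i)) [∀ i, IsProbabilityMeasure (μ i)]
    (k : ι) :
    MeasurePreserving (fun q : X k × (∀ i, X i) => Function.update q.2 k q.1)
      ((μ k).prod (Measure.pi μ)) (Measure.pi μ) := by
  have hm : Measurable (fun q : X k × (∀ i, X i) => Function.update q.2 k q.1) :=
    measurable_update'.comp measurable_swap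
  refine ⟨hm, (Measure.pi_eq fun s hs => ?_).symm⟩
  have hpre : (fun q : X k × (∀ i, X i) => Function.update q.2 k q.1) ⁻¹' univ.pi s
      = s k ×ˢ univ.pi (Function.update s k univ) := by
    ext ⟨x, w⟩
    simp only [mem_preimage, mem_univ_pi, mem_prod]
    constructor
    · refine fun h => ⟨by simpa using h k, fun i => ?_⟩
      obtain rfl | hi := eq_or_ne i k
      · simp
      · simpa [hi] using h i
    · rintro ⟨h1, h2⟩ i
      obtain rfl | hi := eq_or_ne i k
      · simpa using h1
      · simpa [hi] using h2 i
  rw [Measure.map_apply hm (MeasurableSet.univ_pi hs), hpre, Measure.prod_prod, Measure.pi_pi,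
    ← Finset.mul_prod_erase Finset.univ _ (Finset.mem_univ k),
    ← Finset.mul_prod_erase Finset.univ (fun i => μ i (s i)) (Finset.mem_univ k)]
  simp only [Function.update_self, measure_univ, one_mul]
  congr 1
  exact Finset.prod_congr rfl fun i hi => by rw [Function.update_of_ne (Finset.ne_of_mem_erase hi)]

lemma integral_pi_eq_integral_update {ι : Type*} [Fintype ι] [DecidableEq ι] {X : ι → Type*}
    [∀ i, MeasurableSpace (X i)] (μ : ∀ i, Measure (X i)) [∀ i, IsProbabilityMeasure (μ i)]
    (k : ι) {φ : (∀ i, X i) → ℝ} (hφ : Integrable φ (Measure.pi μ)) :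
    ∫ w, φ w ∂Measure.pi μ = ∫ w, ∫ x, φ (Function.update w k x) ∂μ k ∂Measure.pi μ := by
  have mp := measurePreserving_update μ k
  calc ∫ w, φ w ∂Measure.pi μ
      = ∫ q, φ (Function.update q.2 k q.1) ∂(μ k).prod (Measure.pi μ) := by
        rw [← mp.map_eq, integral_map mp.measurable.aemeasurable (by rw [mp.map_eq]; exact hφ.1),
          mp.map_eq]
    _ = ∫ w, ∫ x, φ (Function.update w k x) ∂μ k ∂Measure.pi μ :=
        integral_prod_symm _ (mp.integrable_comp_of_integrable hφ)

/-- The law of a vector of independent standard Gaussians indexed by `K`. -/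
abbrev gaussianPi (K : Type*) [Fintype K] : Measure (K → ℝ) := Measure.pi fun _ => stdG

section Stein

variable {K : Type*} [Fintype K]

instance : IsGaussian (gaussianPi K) := by
  have h := (iIndepFun_pi (μ := fun _ : K => stdG) (X := fun _ x => x)
    fun _ => aemeasurable_id).hasGaussianLaw fun k =>
      ⟨by rw [(measurePreserving_eval (fun _ : K => stdG) k).map_eq]; infer_instance⟩
  simpa using h.isGaussian_map

variable [DecidableEq K]

lemma integral_eval_mul_gaussianPi (k : K) {φ : (K → ℝ) → ℝ} (hφ : φ.HasTemperateGrowth) :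
    ∫ w, w k * φ w ∂gaussianPi K = ∫ w, fderiv ℝ φ w (Pi.single k 1) ∂gaussianPi K := by
  have hk : (fun w : K → ℝ => w k).HasTemperateGrowth :=
    (ContinuousLinearMap.proj (R := ℝ) (φ := fun _ : K => ℝ) k).hasTemperateGrowth
  have hint₀ : Integrable (fun w => w k * φ w) (gaussianPi K) :=
    integrable_of_hasTemperateGrowth (hk.mul hφ)
  have hint₁ : Integrable (fun w => fderiv ℝ φ w (Pi.single k 1)) (gaussianPi K) :=
    integrable_of_hasTemperateGrowth (hasTemperateGrowth_fderiv_apply hφ _)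
  have hline : ∀ (w : K → ℝ) (x : ℝ), Function.update w k x
      = Function.update w k 0 + ContinuousLinearMap.single ℝ (fun _ : K => ℝ) k x := by
    intro w x; ext j; obtain rfl | hj := eq_or_ne j k <;> simp [*]
  rw [integral_pi_eq_integral_update _ k hint₀, integral_pi_eq_integral_update _ k hint₁]
  congr 1; ext w
  have hw : (fun x => Function.update w k x).HasTemperateGrowth := by
    rw [funext (hline w)]; fun_prop
  simp only [Function.update_self]
  refine (integral_mul_stdG (hφ.comp hw)).trans (integral_congr_ae (ae_of_all _ fun x => ?_))
  exact ((hφ.1.differentiable (by simp) _).hasFDerivAt.comp_hasDerivAt x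
    (hasDerivAt_update w k x)).deriv

lemma integral_clm_apply_self_gaussianPi {Φ : (K → ℝ) → (K → ℝ) →L[ℝ] ℝ}
    (hΦ : Φ.HasTemperateGrowth) :
    ∫ w, Φ w w ∂gaussianPi K
      = ∫ w, ∑ k, fderiv ℝ Φ w (Pi.single k 1) (Pi.single k 1) ∂gaussianPi K := by
  have hcoord : ∀ (L : (K → ℝ) →L[ℝ] ℝ) (w : K → ℝ), L w = ∑ k, w k * L (Pi.single k 1) :=
    fun L w => by
      conv_lhs => rw [pi_eq_sum_univ' w, map_sum]
      simp only [map_smul, smul_eq_mul]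
  have hdir : ∀ k, (fun w => Φ w (Pi.single k 1)).HasTemperateGrowth :=
    fun k => hasTemperateGrowth_clm_apply hΦ (.const _)
  have hdiff : ∀ k w, fderiv ℝ (fun w => Φ w (Pi.single k 1)) w (Pi.single k 1)
      = fderiv ℝ Φ w (Pi.single k 1) (Pi.single k 1) := fun k w => by
    rw [fderiv_clm_apply (hΦ.1.differentiable (by simp) w) (differentiableAt_const _)]
    simp
  have hdir' : ∀ k, Integrable (fun w => fderiv ℝ Φ w (Pi.single k 1) (Pi.single k 1))
      (gaussianPi K) := fun k => by
    simpa only [hdiff] using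
      integrable_of_hasTemperateGrowth (hasTemperateGrowth_fderiv_apply (hdir k) (Pi.single k 1))
  have hmul : ∀ k, Integrable (fun w => w k * Φ w (Pi.single k 1)) (gaussianPi K) := fun k =>
    integrable_of_hasTemperateGrowth
      ((ContinuousLinearMap.proj (R := ℝ) (φ := fun _ : K => ℝ) k).hasTemperateGrowth.mul (hdir k))
  calc ∫ w, Φ w w ∂gaussianPi K = ∫ w, ∑ k, w k * Φ w (Pi.single k 1) ∂gaussianPi K := by
        congr 1; ext w
        exact hcoord (Φ w) w
    _ = ∫ w, ∑ k, fderiv ℝ Φ w (Pi.single k 1) (Pi.single k 1) ∂gaussianPi K := by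
        rw [integral_finsetSum _ fun k _ => hmul k, integral_finsetSum _ fun k _ => hdir' k]
        simp_rw [integral_eval_mul_gaussianPi _ (hdir _), hdiff]

end Stein

section Interpolation

variable {E : Type*} [NormedAddCommGroup E] [NormedSpace ℝ E] {K K' : Type*} [Fintype K]
  [Fintype K'] {F : E → ℝ}

lemma hasDerivAt_integral_sin_smul_add_cos_smul {E' : Type*} [NormedAddCommGroup E']
    [NormedSpace ℝ E'] [MeasurableSpace E'] [BorelSpace E'] [CompleteSpace E']
    [SecondCountableTopology E'] (μ : Measure E') [IsGaussian μ] (A B : E' →L[ℝ] E)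
    (hF : F.HasTemperateGrowth) (t : ℝ) :
    HasDerivAt (fun t => ∫ x, F (sin t • A x + cos t • B x) ∂μ)
      (∫ x, fderiv ℝ F (sin t • A x + cos t • B x) (cos t • A x - sin t • B x) ∂μ) t := by
  obtain ⟨k, C, hC, hbound⟩ := exists_norm_le_of_hasTemperateGrowth (hasTemperateGrowth_fderiv hF)
  set R := 1 + ‖A‖ + ‖B‖ with hR
  have hcomb : ∀ (a b : ℝ) (x : E'), |a| ≤ 1 → |b| ≤ 1 → ‖a • A x + b • B x‖ ≤ R * ‖x‖ := by
    intro a b x ha hb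
    calc ‖a • A x + b • B x‖ ≤ |a| * ‖A x‖ + |b| * ‖B x‖ := by
          simpa only [norm_smul, Real.norm_eq_abs] using norm_add_le (a • A x) (b • B x)
      _ ≤ 1 * (‖A‖ * ‖x‖) + 1 * (‖B‖ * ‖x‖) := by gcongr <;> exact ContinuousLinearMap.le_opNorm _ _
      _ ≤ R * ‖x‖ := by rw [hR]; nlinarith [norm_nonneg x]
  have hF' := hasTemperateGrowth_fderiv hF
  have hcont : ∀ s, Continuous fun x => sin s • A x + cos s • B x := fun s => by fun_prop
  refine (hasDerivAt_integral_of_dominated_loc_of_deriv_le (s := univ)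
    (F := fun s x => F (sin s • A x + cos s • B x))
    (F' := fun s x => fderiv ℝ F (sin s • A x + cos s • B x) (cos s • A x - sin s • B x))
    (bound := fun x => C * R ^ (k + 1) * (1 + ‖x‖) ^ (k + 1)) univ_mem
    (Eventually.of_forall fun s => (hF.1.continuous.comp (hcont s)).aestronglyMeasurable)
    (integrable_of_hasTemperateGrowth (hF.comp (by fun_prop))) ?_
    (ae_of_all _ fun x s _ => ?_) ((integrable_one_add_norm_pow μ (k + 1)).const_mul _)
    (ae_of_all _ fun x s _ => ?_)).2
  · exact ((hF'.1.continuous.comp (hcont t)).clm_apply (by fun_prop)).aestronglyMeasurable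
  · have hy := hcomb (sin s) (cos s) x (abs_sin_le_one s) (abs_cos_le_one s)
    have hy' : ‖cos s • A x - sin s • B x‖ ≤ R * ‖x‖ := by
      simpa [sub_eq_add_neg] using
        hcomb (cos s) (-sin s) x (abs_cos_le_one s) (by simpa using abs_sin_le_one s)
    have hR1 : 1 ≤ R := by rw [hR]; nlinarith [norm_nonneg A, norm_nonneg B]
    calc ‖fderiv ℝ F (sin s • A x + cos s • B x) (cos s • A x - sin s • B x)‖
        ≤ C * (1 + ‖sin s • A x + cos s • B x‖) ^ k * ‖cos s • A x - sin s • B x‖ :=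
          (ContinuousLinearMap.le_opNorm _ _).trans (by gcongr; exact hbound _)
      _ ≤ C * (R * (1 + ‖x‖)) ^ k * (R * (1 + ‖x‖)) := by gcongr <;> nlinarith
      _ = C * R ^ (k + 1) * (1 + ‖x‖) ^ (k + 1) := by rw [mul_pow]; ring
  · have hpath : HasDerivAt (fun s => sin s • A x + cos s • B x) (cos s • A x - sin s • B x) s := by
      simpa [sub_eq_add_neg] using
        ((hasDerivAt_sin s).smul_const (A x)).fun_add ((hasDerivAt_cos s).smul_const (B x))
    exact (hF.1.differentiable (by simp) _).hasFDerivAt.comp_hasDerivAt s hpath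

variable [DecidableEq K]

/-- The second order operator `F ↦ tr(A Aᵀ D²F)`, twice the generator of Brownian motion with
covariance `A Aᵀ`. -/
def covLaplacian (A : (K → ℝ) →L[ℝ] E) (F : E → ℝ) (x : E) : ℝ :=
  ∑ k, fderiv ℝ (fderiv ℝ F) x (A (Pi.single k 1)) (A (Pi.single k 1))

lemma hasTemperateGrowth_covLaplacian (A : (K → ℝ) →L[ℝ] E) (hF : F.HasTemperateGrowth) :
    (covLaplacian A F).HasTemperateGrowth :=
  .sum fun k _ => (ContinuousLinearMap.apply ℝ ℝ (A (Pi.single k 1))).hasTemperateGrowth.comp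
    (hasTemperateGrowth_fderiv_apply (hasTemperateGrowth_fderiv hF) _)

lemma integral_fderiv_apply_self_gaussianPi (A : (K → ℝ) →L[ℝ] E) (hF : F.HasTemperateGrowth)
    (r : ℝ) (c : E) :
    ∫ w, fderiv ℝ F (r • A w + c) (A w) ∂gaussianPi K
      = r * ∫ w, covLaplacian A F (r • A w + c) ∂gaussianPi K := by
  have hF' := hasTemperateGrowth_fderiv hF
  set precomp := (ContinuousLinearMap.compL ℝ (K → ℝ) E ℝ).flip A
  have hΦ : (fun w => precomp (fderiv ℝ F (r • A w + c))).HasTemperateGrowth :=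
    precomp.hasTemperateGrowth.comp (hF'.comp (by fun_prop))
  have hderiv : ∀ w u, fderiv ℝ (fun w => precomp (fderiv ℝ F (r • A w + c))) w u u
      = r * fderiv ℝ (fderiv ℝ F) (r • A w + c) (A u) (A u) := fun w u => by
    have hin : HasFDerivAt (fun w => r • A w + c) (r • A) w :=
      (A.hasFDerivAt.const_smul r).add_const c
    have hout := (hF'.1.differentiable (by simp) (r • A w + c)).hasFDerivAt.comp w hin
    have hall : HasFDerivAt (fun w => precomp (fderiv ℝ F (r • A w + c))) _ w :=
      precomp.hasFDerivAt.comp w hout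
    rw [hall.fderiv]
    simp [precomp]
  rw [← integral_const_mul]
  refine (integral_clm_apply_self_gaussianPi hΦ).trans ?_
  simp_rw [hderiv, ← Finset.mul_sum]
  rfl

lemma integral_fderiv_apply_fst (A : (K → ℝ) →L[ℝ] E) (B : (K' → ℝ) →L[ℝ] E)
    (hF : F.HasTemperateGrowth) (r s : ℝ) :
    ∫ q, fderiv ℝ F (r • A q.1 + s • B q.2) (A q.1) ∂(gaussianPi K).prod (gaussianPi K')
      = r * ∫ q, covLaplacian A F (r • A q.1 + s • B q.2)
        ∂(gaussianPi K).prod (gaussianPi K') := by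
  have hfst : (Prod.fst : (K → ℝ) × (K' → ℝ) → K → ℝ).HasTemperateGrowth :=
    (ContinuousLinearMap.fst ℝ (K → ℝ) (K' → ℝ)).hasTemperateGrowth
  have hsnd : (Prod.snd : (K → ℝ) × (K' → ℝ) → K' → ℝ).HasTemperateGrowth :=
    (ContinuousLinearMap.snd ℝ (K → ℝ) (K' → ℝ)).hasTemperateGrowth
  have hpoint : (fun q : (K → ℝ) × (K' → ℝ) => r • A q.1 + s • B q.2).HasTemperateGrowth :=
    ((Function.HasTemperateGrowth.const r).smul (A.hasTemperateGrowth.comp hfst)).add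
      ((Function.HasTemperateGrowth.const s).smul (B.hasTemperateGrowth.comp hsnd))
  refine (integral_prod_symm _ (integrable_of_hasTemperateGrowth
    (hasTemperateGrowth_clm_apply ((hasTemperateGrowth_fderiv hF).comp hpoint)
      (A.hasTemperateGrowth.comp hfst)))).trans ?_
  refine Eq.trans ?_ (congrArg (r * ·) (integral_prod_symm _ (integrable_of_hasTemperateGrowth
    ((hasTemperateGrowth_covLaplacian A hF).comp hpoint)))).symm
  refine Eq.trans ?_ (integral_const_mul _ _)
  congr 1; ext w'
  exact integral_fderiv_apply_self_gaussianPi A hF r (s • B w')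

variable [DecidableEq K']

lemma hasDerivAt_integral_interpolation (A : (K → ℝ) →L[ℝ] E) (B : (K' → ℝ) →L[ℝ] E)
    (hF : F.HasTemperateGrowth) (t : ℝ) :
    HasDerivAt
      (fun t => ∫ q, F (sin t • A q.1 + cos t • B q.2) ∂(gaussianPi K).prod (gaussianPi K'))
      (sin t * cos t * ∫ q, (covLaplacian A F (sin t • A q.1 + cos t • B q.2)
        - covLaplacian B F (sin t • A q.1 + cos t • B q.2))
        ∂(gaussianPi K).prod (gaussianPi K')) t := by
  set A' : (K → ℝ) × (K' → ℝ) →L[ℝ] E := A.comp (.fst ℝ _ _)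
  set B' : (K → ℝ) × (K' → ℝ) →L[ℝ] E := B.comp (.snd ℝ _ _)
  set P := (gaussianPi K).prod (gaussianPi K')
  have hpoint : (fun q => sin t • A' q + cos t • B' q).HasTemperateGrowth := by fun_prop
  have hint : ∀ L : (K → ℝ) × (K' → ℝ) →L[ℝ] E,
      Integrable (fun q => fderiv ℝ F (sin t • A' q + cos t • B' q) (L q)) P := fun L =>
    integrable_of_hasTemperateGrowth (hasTemperateGrowth_clm_apply
      ((hasTemperateGrowth_fderiv hF).comp hpoint) L.hasTemperateGrowth)
  have hA : ∫ q, fderiv ℝ F (sin t • A' q + cos t • B' q) (A' q) ∂P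
      = sin t * ∫ q, covLaplacian A F (sin t • A' q + cos t • B' q) ∂P :=
    integral_fderiv_apply_fst A B hF (sin t) (cos t)
  have hB : ∫ q, fderiv ℝ F (sin t • A' q + cos t • B' q) (B' q) ∂P
      = cos t * ∫ q, covLaplacian B F (sin t • A' q + cos t • B' q) ∂P := by
    have h := integral_fderiv_apply_fst B A hF (cos t) (sin t)
    rw [← integral_prod_swap (μ := gaussianPi K'), ← integral_prod_swap (μ := gaussianPi K')] at h
    simp only [add_comm (cos t • _), Prod.fst_swap, Prod.snd_swap] at h
    exact h
  refine (hasDerivAt_integral_sin_smul_add_cos_smul P A' B' hF t).congr_deriv ?_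
  simp only [map_sub, map_smul, smul_eq_mul]
  rw [integral_sub ((hint A').const_mul _) ((hint B').const_mul _), integral_const_mul,
    integral_const_mul, hA, hB]
  have hlap : ∫ q, (covLaplacian A F (sin t • A' q + cos t • B' q)
        - covLaplacian B F (sin t • A' q + cos t • B' q)) ∂P
      = ∫ q, covLaplacian A F (sin t • A' q + cos t • B' q) ∂P
        - ∫ q, covLaplacian B F (sin t • A' q + cos t • B' q) ∂P :=
    integral_sub
      (integrable_of_hasTemperateGrowth ((hasTemperateGrowth_covLaplacian A hF).comp hpoint))
      (integrable_of_hasTemperateGrowth ((hasTemperateGrowth_covLaplacian B hF).comp hpoint))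
  refine Eq.trans ?_ (congrArg _ hlap).symm
  ring

lemma integral_le_integral_of_covLaplacian_le (A : (K → ℝ) →L[ℝ] E) (B : (K' → ℝ) →L[ℝ] E)
    (hF : F.HasTemperateGrowth) (hle : ∀ x, covLaplacian B F x ≤ covLaplacian A F x) :
    ∫ w, F (B w) ∂gaussianPi K' ≤ ∫ w, F (A w) ∂gaussianPi K := by
  have hderiv := hasDerivAt_integral_interpolation A B hF
  set I := fun t : ℝ =>
    ∫ q, F (sin t • A q.1 + cos t • B q.2) ∂(gaussianPi K).prod (gaussianPi K')
  have hmono : MonotoneOn I (Icc 0 (π / 2)) := by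
    refine monotoneOn_of_deriv_nonneg (convex_Icc _ _)
      (fun t _ => (hderiv t).continuousAt.continuousWithinAt)
      (fun t _ => (hderiv t).differentiableAt.differentiableWithinAt) fun t ht => ?_
    rw [interior_Icc] at ht
    rw [(hderiv t).deriv]
    exact mul_nonneg (mul_nonneg
      (sin_nonneg_of_nonneg_of_le_pi ht.1.le (by linarith [ht.2, pi_pos]))
      (cos_nonneg_of_mem_Icc ⟨by linarith [ht.1, pi_pos], ht.2.le⟩))
      (integral_nonneg fun q => sub_nonneg.2 (hle _))
  have h0 : I 0 = ∫ w, F (B w) ∂gaussianPi K' := by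
    simp [I, integral_fun_snd (fun w => F (B w))]
  have h1 : I (π / 2) = ∫ w, F (A w) ∂gaussianPi K := by
    simp [I, integral_fun_fst (fun w => F (A w))]
  have hpi : 0 ≤ π / 2 := by positivity
  rw [← h0, ← h1]
  exact hmono (left_mem_Icc.2 hpi) (right_mem_Icc.2 hpi) hpi

end Interpolation

/-! ### Gordon's comparison inequality -/

section MixedIncrements

variable {E : Type*} [NormedAddCommGroup E] [NormedSpace ℝ E]

lemma fderiv_apply_nonneg {H : E → ℝ} {x v : E} (hH : DifferentiableAt ℝ H x)
    (h : ∀ t : ℝ, 0 ≤ t → H x ≤ H (x + t • v)) : 0 ≤ fderiv ℝ H x v := by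
  have hslope := hH.hasFDerivAt.hasLineDerivAt v |>.tendsto_slope_zero_right
  refine ge_of_tendsto hslope (eventually_nhdsWithin_of_forall fun t ht => ?_)
  exact smul_nonneg (inv_nonneg.2 (mem_Ioi.1 ht).le) (sub_nonneg.2 (h t (mem_Ioi.1 ht).le))

lemma fderiv_fderiv_apply_nonneg {F : E → ℝ} (hF : ContDiff ℝ 2 F) {u v : E}
    (h : ∀ x (s t : ℝ), 0 ≤ s → 0 ≤ t →
      F (x + s • u) + F (x + t • v) ≤ F (x + s • u + t • v) + F x) (x : E) :
    0 ≤ fderiv ℝ (fderiv ℝ F) x u v := by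
  have hdiff : Differentiable ℝ F := hF.differentiable (by norm_num)
  have hdiff' : DifferentiableAt ℝ (fderiv ℝ F) x :=
    (hF.fderiv_right (m := 1) (by norm_num)).differentiable one_ne_zero x
  have hmono : ∀ s : ℝ, 0 ≤ s → fderiv ℝ F x v ≤ fderiv ℝ F (x + s • u) v := by
    intro s hs
    have hincr : HasFDerivAt (fun y => F (y + s • u) - F y)
        (fderiv ℝ F (x + s • u) - fderiv ℝ F x) x :=
      ((hasFDerivAt_comp_add_right (s • u)).2 (hdiff _).hasFDerivAt).sub (hdiff x).hasFDerivAt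
    have hnonneg := fderiv_apply_nonneg (v := v) hincr.differentiableAt fun t ht => by
      have := h x s t hs ht
      rw [add_right_comm] at this
      linarith
    rw [hincr.fderiv] at hnonneg
    simpa using hnonneg
  have hdir : HasFDerivAt (fun y => fderiv ℝ F y v) ((fderiv ℝ (fderiv ℝ F) x).flip v) x := by
    simpa using hdiff'.hasFDerivAt.clm_apply (hasFDerivAt_const v x)
  have hnonneg := fderiv_apply_nonneg (v := u) hdir.differentiableAt hmono
  rwa [hdir.fderiv] at hnonneg

lemma hasTemperateGrowth_finsetProd {ι : Type*} (s : Finset ι) {φ : ι → E → ℝ}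
    (hφ : ∀ i, (φ i).HasTemperateGrowth) : (fun x => ∏ i ∈ s, φ i x).HasTemperateGrowth := by
  classical
  induction s using Finset.induction_on with
  | empty => simp only [Finset.prod_empty, Function.HasTemperateGrowth.const]
  | insert i s hi ih => simpa only [Finset.prod_insert hi] using! (hφ i).mul ih

end MixedIncrements

open scoped ContDiff in
lemma hasTemperateGrowth_smoothTransition : smoothTransition.HasTemperateGrowth := by
  have hsmooth : ContDiff ℝ ∞ smoothTransition := smoothTransition.contDiff
  have hsupp : HasCompactSupport (fderiv ℝ smoothTransition) := by
    refine HasCompactSupport.of_support_subset_isCompact (isCompact_Icc (a := 0) (b := 1))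
      fun x hx => ?_
    by_contra hmem
    refine hx ?_
    obtain hlt | hlt : x < 0 ∨ 1 < x := by simpa only [mem_Icc, not_and_or, not_le] using hmem
    · have hzero : smoothTransition =ᶠ[𝓝 x] fun _ => 0 :=
        (eventually_lt_nhds hlt).mono fun _ hy => smoothTransition.zero_of_nonpos hy.le
      simp [hzero.fderiv_eq]
    · have hone : smoothTransition =ᶠ[𝓝 x] fun _ => 1 :=
        (eventually_gt_nhds hlt).mono fun _ hy => smoothTransition.one_of_one_le hy.le
      simp [hone.fderiv_eq]
  refine .of_fderiv (hsupp.hasTemperateGrowth (hsmooth.fderiv_right (by simp)))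
    (hsmooth.differentiable (by simp)) (k := 0) (C := 1) fun x => ?_
  simpa [abs_of_nonneg (smoothTransition.nonneg x)] using smoothTransition.le_one x

section SoftMinMax

variable {I J : Type*} [Fintype J]

/-- A smooth surrogate of the indicator of `{x | ∃ j, 0 < x (i, j)}`, to which it converges as
`m → ∞`. -/
def softMax (m : ℕ) (i : I) (x : I × J → ℝ) : ℝ :=
  1 - ∏ j, (1 - smoothTransition (m * x (i, j)))

lemma softMax_nonneg (m : ℕ) (i : I) (x : I × J → ℝ) : 0 ≤ softMax m i x :=
  sub_nonneg.2 (Finset.prod_le_one (fun _ _ => sub_nonneg.2 (smoothTransition.le_one _))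
    fun _ _ => sub_le_self _ (smoothTransition.nonneg _))

lemma softMax_le_one (m : ℕ) (i : I) (x : I × J → ℝ) : softMax m i x ≤ 1 :=
  sub_le_self _ (Finset.prod_nonneg fun _ _ => sub_nonneg.2 (smoothTransition.le_one _))

lemma monotone_softMax (m : ℕ) (i : I) : Monotone (softMax m i : (I × J → ℝ) → ℝ) :=
  fun _ _ hxy => sub_le_sub_left (Finset.prod_le_prod
    (fun _ _ => sub_nonneg.2 (smoothTransition.le_one _)) fun j _ => sub_le_sub_left
      (smoothTransition.monotone (mul_le_mul_of_nonneg_left (hxy (i, j)) m.cast_nonneg)) 1) 1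

lemma softMax_add_single [DecidableEq I] [DecidableEq J] (m : ℕ) {i : I} {a : I × J} (ha : a.1 ≠ i)
    (x : I × J → ℝ) (t : ℝ) : softMax m i (x + t • Pi.single a 1) = softMax m i x := by
  have hoff : ∀ j, (Pi.single a 1 : I × J → ℝ) (i, j) = 0 := fun j =>
    Pi.single_eq_of_ne (fun h => ha (congrArg Prod.fst h).symm) _
  simp only [softMax, Pi.add_apply, Pi.smul_apply, hoff, smul_zero, add_zero]

variable [Fintype I]

/-- A smooth surrogate of the indicator of `{x | ∀ i, ∃ j, 0 < x (i, j)}`, to which it converges as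
`m → ∞`. -/
def softMinMax (m : ℕ) (x : I × J → ℝ) : ℝ := ∏ i, softMax m i x

lemma softMinMax_nonneg (m : ℕ) (x : I × J → ℝ) : 0 ≤ softMinMax m x :=
  Finset.prod_nonneg fun i _ => softMax_nonneg m i x

lemma softMinMax_le_one (m : ℕ) (x : I × J → ℝ) : softMinMax m x ≤ 1 :=
  Finset.prod_le_one (fun i _ => softMax_nonneg m i x) fun i _ => softMax_le_one m i x

lemma hasTemperateGrowth_softMinMax (m : ℕ) :
    (softMinMax m : (I × J → ℝ) → ℝ).HasTemperateGrowth := by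
  have hcoord : ∀ a : I × J,
      (fun x : I × J → ℝ => smoothTransition (m * x a)).HasTemperateGrowth := fun a =>
    hasTemperateGrowth_smoothTransition.comp
      ((m : ℝ) • ContinuousLinearMap.proj (R := ℝ) (φ := fun _ : I × J => ℝ) a).hasTemperateGrowth
  exact hasTemperateGrowth_finsetProd _ fun i => (Function.HasTemperateGrowth.const 1).sub
    (hasTemperateGrowth_finsetProd _ fun j => (Function.HasTemperateGrowth.const 1).sub
      (hcoord (i, j)))

lemma softMinMax_mixed_increment [DecidableEq I] [DecidableEq J] (m : ℕ) {a b : I × J}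
    (hab : a.1 ≠ b.1) (x : I × J → ℝ) {s t : ℝ} (hs : 0 ≤ s) (ht : 0 ≤ t) :
    softMinMax m (x + s • Pi.single a 1) + softMinMax m (x + t • Pi.single b 1)
      ≤ softMinMax m (x + s • Pi.single a 1 + t • Pi.single b 1) + softMinMax m x := by
  set rest : (I × J → ℝ) → ℝ := fun y => ∏ i ∈ Finset.univ.erase a.1, softMax m i y
  have hsplit : ∀ y, softMinMax m y = softMax m a.1 y * rest y := fun y =>
    (Finset.mul_prod_erase _ _ (Finset.mem_univ _)).symm
  have hrest : ∀ y, rest (y + s • Pi.single a 1) = rest y := fun y =>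
    Finset.prod_congr rfl fun i hi => softMax_add_single m (Finset.ne_of_mem_erase hi).symm y s
  have hincr : ∀ (y : I × J → ℝ) (c : I × J) {r : ℝ}, 0 ≤ r → y ≤ y + r • Pi.single c 1 :=
    fun y c r hr => le_add_of_nonneg_right (smul_nonneg hr (Pi.single_nonneg.2 zero_le_one))
  have hrow : softMax m a.1 x ≤ softMax m a.1 (x + s • Pi.single a 1) :=
    monotone_softMax m a.1 (hincr x a hs)
  have hmono : rest x ≤ rest (x + t • Pi.single b 1) := Finset.prod_le_prod
    (fun i _ => softMax_nonneg m i x) fun i _ => monotone_softMax m i (hincr x b ht)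
  simp only [hsplit, softMax_add_single m hab.symm]
  rw [add_right_comm x, hrest, hrest]
  nlinarith [mul_nonneg (sub_nonneg.2 hrow) (sub_nonneg.2 hmono)]

lemma eventually_softMinMax_eq (x : I × J → ℝ) : ∀ᶠ m : ℕ in atTop,
    softMinMax m x = {x : I × J → ℝ | ∀ i, ∃ j, 0 < x (i, j)}.indicator 1 x := by
  have hcoord : ∀ a, ∀ᶠ m : ℕ in atTop,
      smoothTransition (m * x a) = if 0 < x a then 1 else 0 := by
    intro a
    split_ifs with ha
    · filter_upwards [(tendsto_natCast_atTop_atTop.atTop_mul_const ha).eventually_ge_atTop 1]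
        with m hm using smoothTransition.one_of_one_le hm
    · exact Eventually.of_forall fun m => smoothTransition.zero_of_nonpos
        (mul_nonpos_of_nonneg_of_nonpos m.cast_nonneg (not_lt.1 ha))
  filter_upwards [eventually_all.2 hcoord] with m hm
  have hrow : ∀ i, softMax m i x = if ∃ j, 0 < x (i, j) then 1 else 0 := by
    intro i
    rw [softMax]
    split_ifs with hi
    · obtain ⟨j, hj⟩ := hi
      rw [Finset.prod_eq_zero (Finset.mem_univ j) (by simp [hm, hj]), sub_zero]
    · rw [Finset.prod_eq_one fun j _ => by simp [hm, not_lt.1 (not_exists.1 hi j)], sub_self]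
  rw [softMinMax, Finset.prod_congr rfl fun i _ => hrow i, Finset.prod_boole]
  simp [indicator]

lemma tendsto_integral_softMinMax {Ω : Type*} [MeasurableSpace Ω] (μ : Measure Ω)
    [IsFiniteMeasure μ] {X : Ω → I × J → ℝ} (hX : Measurable X) :
    Tendsto (fun m => ∫ w, softMinMax m (X w) ∂μ) atTop
      (𝓝 (μ.real {w | ∀ i, ∃ j, 0 < X w (i, j)})) := by
  have hmeas : MeasurableSet {w | ∀ i, ∃ j, 0 < X w (i, j)} := by
    simp only [ofPred_forall, ofPred_exists]
    exact .iInter fun i => .iUnion fun j => measurableSet_lt measurable_const (hX.eval)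
  rw [← integral_indicator_one hmeas]
  refine tendsto_integral_of_dominated_convergence (fun _ => 1)
    (fun m =>
      ((hasTemperateGrowth_softMinMax m).1.continuous.measurable.comp hX).aestronglyMeasurable)
    (integrable_const 1) (fun m => ae_of_all _ fun w => ?_) (ae_of_all _ fun w => ?_)
  · rw [Real.norm_of_nonneg (softMinMax_nonneg m _)]
    exact softMinMax_le_one m _
  · exact tendsto_const_nhds.congr' ((eventually_softMinMax_eq (X w)).mono fun m hm => hm.symm)

end SoftMinMax

section GaussianComparison

lemma covLaplacian_mulVecLin {ι K : Type*} [Fintype ι] [DecidableEq ι] [Fintype K] [DecidableEq K]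
    (A : Matrix ι K ℝ) (F : (ι → ℝ) → ℝ) (x : ι → ℝ) :
    covLaplacian (Matrix.mulVecLin A).toContinuousLinearMap F x
      = ∑ a, ∑ b, (A a ⬝ᵥ A b)
        * fderiv ℝ (fderiv ℝ F) x (Pi.single a 1) (Pi.single b 1) := by
  have hcol : ∀ k, A.mulVec (Pi.single k 1) = ∑ a, A a k • Pi.single a (1 : ℝ) := fun k => by
    rw [Matrix.mulVec_single_one, pi_eq_sum_univ' (A.col k)]
    rfl
  simp only [covLaplacian, LinearMap.coe_toContinuousLinearMap', Matrix.mulVecLin_apply, hcol,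
    map_sum, map_smul, _root_.sum_apply, _root_.smul_apply, smul_eq_mul,
    dotProduct, Finset.sum_mul, Finset.mul_sum]
  rw [Finset.sum_comm_cycle]
  refine Finset.sum_congr rfl fun a _ => Finset.sum_comm.trans ?_
  exact Finset.sum_congr rfl fun b _ => Finset.sum_congr rfl fun k _ => by ring

variable {K K' : Type*} [Fintype K] [Fintype K']

lemma integral_le_integral_of_cov_le {ι : Type*} [Fintype ι] [DecidableEq ι] {F : (ι → ℝ) → ℝ}
    (hF : F.HasTemperateGrowth) (A : ι → K → ℝ) (B : ι → K' → ℝ)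
    (hle : ∀ x a b, (B a ⬝ᵥ B b) * fderiv ℝ (fderiv ℝ F) x (Pi.single a 1) (Pi.single b 1)
      ≤ (A a ⬝ᵥ A b) * fderiv ℝ (fderiv ℝ F) x (Pi.single a 1) (Pi.single b 1)) :
    ∫ w, F (fun a => B a ⬝ᵥ w) ∂gaussianPi K' ≤ ∫ w, F (fun a => A a ⬝ᵥ w) ∂gaussianPi K := by
  classical
  refine integral_le_integral_of_covLaplacian_le
    (Matrix.mulVecLin (Matrix.of A)).toContinuousLinearMap
    (Matrix.mulVecLin (Matrix.of B)).toContinuousLinearMap hF fun x => ?_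
  rw [covLaplacian_mulVecLin, covLaplacian_mulVecLin]
  exact Finset.sum_le_sum fun a _ => Finset.sum_le_sum fun b _ => hle x a b

lemma measure_forall_exists_pos_le_of_finite {I J : Type*} [Finite I] [Finite J]
    (A : I × J → K → ℝ) (B : I × J → K' → ℝ) (hle : ∀ a b, B a ⬝ᵥ B b ≤ A a ⬝ᵥ A b)
    (heq : ∀ a b, a.1 = b.1 → B a ⬝ᵥ B b = A a ⬝ᵥ A b) (d : I × J → ℝ) :
    gaussianPi K' {w | ∀ i, ∃ j, 0 < B (i, j) ⬝ᵥ w + d (i, j)}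
      ≤ gaussianPi K {w | ∀ i, ∃ j, 0 < A (i, j) ⬝ᵥ w + d (i, j)} := by
  classical
  have := Fintype.ofFinite I
  have := Fintype.ofFinite J
  have hF : ∀ m, (fun x : I × J → ℝ => softMinMax m (x + d)).HasTemperateGrowth := fun m =>
    (hasTemperateGrowth_softMinMax m).comp (by fun_prop)
  have hsmooth : ∀ m, ∫ w, softMinMax m ((fun a => B a ⬝ᵥ w) + d) ∂gaussianPi K'
      ≤ ∫ w, softMinMax m ((fun a => A a ⬝ᵥ w) + d) ∂gaussianPi K := by
    intro m
    refine integral_le_integral_of_cov_le (hF m) A B fun x a b => ?_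
    obtain hab | hab := eq_or_ne a.1 b.1
    · rw [heq a b hab]
    · refine mul_le_mul_of_nonneg_right (hle a b) (fderiv_fderiv_apply_nonneg
        ((hF m).1.of_le (WithTop.coe_le_coe.2 le_top)) (fun y s t hs ht => ?_) x)
      simpa only [add_right_comm _ _ d] using softMinMax_mixed_increment m hab (y + d) hs ht
  have hlim := le_of_tendsto_of_tendsto'
    (tendsto_integral_softMinMax (gaussianPi K') (X := fun w => (fun a => B a ⬝ᵥ w) + d)
      (by unfold dotProduct; fun_prop))
    (tendsto_integral_softMinMax (gaussianPi K) (X := fun w => (fun a => A a ⬝ᵥ w) + d)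
      (by unfold dotProduct; fun_prop)) hsmooth
  exact (ENNReal.toReal_le_toReal (measure_ne_top _ _) (measure_ne_top _ _)).1 hlim

lemma measure_iInter_iUnion_le {Ω Ω' : Type*} [MeasurableSpace Ω] [MeasurableSpace Ω']
    {μ : Measure Ω} {ν : Measure Ω'} [IsFiniteMeasure ν] (s : ℕ → ℕ → Set Ω) {t : ℕ → ℕ → Set Ω'}
    (ht : ∀ i j, MeasurableSet (t i j))
    (h : ∀ k l, μ (⋂ i : Fin k, ⋃ j : Fin l, s i j) ≤ ν (⋂ i : Fin k, ⋃ j : Fin l, t i j)) :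
    μ (⋂ i, ⋃ j, s i j) ≤ ν (⋂ i, ⋃ j, t i j) := by
  have hfin : ∀ k, μ (⋂ i : Fin k, ⋃ j, s i j) ≤ ν (⋂ i : Fin k, ⋃ j, t i j) := by
    intro k
    have hmono : Monotone fun l : ℕ => ⋂ i : Fin k, ⋃ j : Fin l, s i j := fun l l' hl =>
      iInter_mono fun i => iUnion_subset fun j => subset_iUnion_of_subset (j.castLE hl) subset_rfl
    refine (measure_mono fun w hw => ?_).trans
      (le_of_tendsto' (tendsto_measure_iUnion_atTop hmono) fun l => (h k l).trans (measure_mono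
        (iInter_mono fun i => iUnion_subset fun j => subset_iUnion (t i) j)))
    simp only [mem_iInter, mem_iUnion] at hw ⊢
    choose j hj using hw
    exact ⟨Finset.univ.sup j + 1, fun i =>
      ⟨⟨j i, Nat.lt_succ_of_le (Finset.le_sup (Finset.mem_univ i))⟩, hj i⟩⟩
  have hanti : Antitone fun k : ℕ => ⋂ i : Fin k, ⋃ j, t i j := fun k k' hk =>
    subset_iInter fun i => iInter_subset_of_subset (i.castLE hk) subset_rfl
  have hinter : ⋂ i, ⋃ j, t i j = ⋂ k : ℕ, ⋂ i : Fin k, ⋃ j, t i j := by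
    refine subset_antisymm (subset_iInter fun k => subset_iInter fun i => iInter_subset _ (i : ℕ))
      (subset_iInter fun i => iInter_subset_of_subset (i + 1) (iInter_subset _ (Fin.last i)))
  rw [hinter]
  exact ge_of_tendsto' (tendsto_measure_iInter_atTop
    (fun k => (MeasurableSet.iInter fun i : Fin k => .iUnion fun j => ht i j).nullMeasurableSet)
    hanti ⟨0, measure_ne_top _ _⟩) fun k =>
      (measure_mono (subset_iInter fun i : Fin k => iInter_subset _ (i : ℕ))).trans (hfin k)

lemma measure_forall_exists_pos_le (A : ℕ × ℕ → K → ℝ) (B : ℕ × ℕ → K' → ℝ)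
    (hle : ∀ a b, B a ⬝ᵥ B b ≤ A a ⬝ᵥ A b)
    (heq : ∀ a b, a.1 = b.1 → B a ⬝ᵥ B b = A a ⬝ᵥ A b) (d : ℕ × ℕ → ℝ) :
    gaussianPi K' {w | ∀ i, ∃ j, 0 < B (i, j) ⬝ᵥ w + d (i, j)}
      ≤ gaussianPi K {w | ∀ i, ∃ j, 0 < A (i, j) ⬝ᵥ w + d (i, j)} := by
  simp only [ofPred_forall, ofPred_exists]
  refine measure_iInter_iUnion_le _ (fun i j => ?_) fun k l => ?_
  · exact measurableSet_lt measurable_const (by unfold dotProduct; fun_prop)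
  · have h := measure_forall_exists_pos_le_of_finite (I := Fin k) (J := Fin l)
      (fun a => A (a.1, a.2)) (fun a => B (a.1, a.2)) (fun a b => hle _ _)
      (fun a b hab => heq _ _ (by simp [hab])) fun a => d (a.1, a.2)
    simpa only [ofPred_forall, ofPred_exists] using h

end GaussianComparison

section Gordon

open scoped Matrix

variable {α β : Type*} [Fintype α] [Fintype β]

lemma l2_nonneg (v : α → ℝ) : 0 ≤ l2 v := sqrt_nonneg _

lemma l2_sq (v : α → ℝ) : l2 v ^ 2 = v ⬝ᵥ v := by
  simp only [l2, dotProduct, ← sq]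
  exact sq_sqrt (Finset.sum_nonneg fun _ _ => sq_nonneg _)

lemma dotProduct_le_l2_mul_l2 (v w : α → ℝ) : v ⬝ᵥ w ≤ l2 v * l2 w :=
  sum_mul_le_sqrt_mul_sqrt _ _ _

@[fun_prop]
lemma continuous_l2 : Continuous (l2 : (α → ℝ) → ℝ) := by
  unfold l2
  fun_prop

@[fun_prop]
lemma measurable_dotProduct {Ω : Type*} [MeasurableSpace Ω] {v w : Ω → α → ℝ}
    (hv : Measurable v) (hw : Measurable w) : Measurable fun ω => v ω ⬝ᵥ w ω := by
  unfold dotProduct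
  fun_prop

@[fun_prop]
lemma measurable_mulVec {Ω γ : Type*} [MeasurableSpace Ω] {M : Ω → γ → α → ℝ} {v : Ω → α → ℝ}
    (hM : Measurable M) (hv : Measurable v) : Measurable fun ω => M ω *ᵥ v ω :=
  measurable_pi_lambda _ fun i => measurable_dotProduct ((measurable_pi_apply i).comp hM) hv

/-- The law of a matrix with independent standard Gaussian entries, given by its rows. -/
abbrev gaussianMatrix (α β : Type*) [Fintype α] [Fintype β] : Measure (α → β → ℝ) :=
  Measure.pi fun _ => gaussianPi β

lemma measurePreserving_curry_gaussianPi :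
    MeasurePreserving Function.curry (gaussianPi (α × β)) (gaussianMatrix α β) := by
  refine ⟨(MeasurableEquiv.curry α β ℝ).measurable, ?_⟩
  have h := Measure.infinitePi_map_curry fun (_ : α) (_ : β) => stdG
  simp only [Measure.infinitePi_eq_pi] at h
  exact h

lemma measurableSet_exists_forall_nonpos {Ω : Type*} [MeasurableSpace Ω] {φ : ℕ × ℕ → Ω → ℝ}
    (hφ : ∀ a, Measurable (φ a)) : MeasurableSet {ω | ∃ i, ∀ j, φ (i, j) ω ≤ 0} := by
  simp only [ofPred_forall, ofPred_exists]
  exact .iUnion fun i => .iInter fun j => measurableSet_le (hφ _) measurable_const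

lemma measure_exists_forall_nonpos_eq {Ω : Type*} [MeasurableSpace Ω] (P : Measure Ω)
    [IsProbabilityMeasure P] {φ : ℕ × ℕ → Ω → ℝ} (hφ : ∀ a, Measurable (φ a)) :
    P {ω | ∃ i, ∀ j, φ (i, j) ω ≤ 0} = 1 - P {ω | ∀ i, ∃ j, 0 < φ (i, j) ω} := by
  have hcompl : {ω | ∀ i, ∃ j, 0 < φ (i, j) ω} = {ω | ∃ i, ∀ j, φ (i, j) ω ≤ 0}ᶜ := by
    simp only [compl_ofPred, not_forall, not_exists, not_le]
  rw [hcompl, ← prob_compl_eq_one_sub (measurableSet_exists_forall_nonpos hφ).compl, compl_compl]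

lemma measure_exists_forall_nonpos_le {K K' : Type*} [Fintype K] [Fintype K']
    (A : ℕ × ℕ → K → ℝ) (B : ℕ × ℕ → K' → ℝ) (hle : ∀ a b, B a ⬝ᵥ B b ≤ A a ⬝ᵥ A b)
    (heq : ∀ a b, a.1 = b.1 → B a ⬝ᵥ B b = A a ⬝ᵥ A b) (d : ℕ × ℕ → ℝ) :
    gaussianPi K {w | ∃ i, ∀ j, A (i, j) ⬝ᵥ w + d (i, j) ≤ 0}
      ≤ gaussianPi K' {w | ∃ i, ∀ j, B (i, j) ⬝ᵥ w + d (i, j) ≤ 0} := by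
  rw [measure_exists_forall_nonpos_eq _ (φ := fun a w => A a ⬝ᵥ w + d a)
      fun a => by fun_prop,
    measure_exists_forall_nonpos_eq _ (φ := fun a w => B a ⬝ᵥ w + d a)
      fun a => by fun_prop]
  exact tsub_le_tsub_left (measure_forall_exists_pos_le A B hle heq d) 1

/-- The coefficients of the bilinear Gaussian process `l ⬝ᵥ w *ᵥ θ + ‖θ‖ ‖l‖ z`. -/
def bilinearCoeff (θ : β → ℝ) (l : α → ℝ) : (α × β) ⊕ Unit → ℝ :=
  Sum.elim (fun k => l k.1 * θ k.2) fun _ => l2 θ * l2 l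

/-- The coefficients of the decoupled Gaussian process `‖l‖ (θ ⬝ᵥ g) + ‖θ‖ (l ⬝ᵥ h)`. -/
def decoupledCoeff (θ : β → ℝ) (l : α → ℝ) : β ⊕ α → ℝ :=
  Sum.elim (l2 l • θ) (l2 θ • l)

lemma bilinearCoeff_dotProduct (θ : β → ℝ) (l : α → ℝ) (w : (α × β) ⊕ Unit → ℝ) :
    bilinearCoeff θ l ⬝ᵥ w
      = l ⬝ᵥ (Function.curry (w ∘ Sum.inl) *ᵥ θ) + l2 θ * l2 l * w (Sum.inr ()) := by
  simp [bilinearCoeff, dotProduct, Matrix.mulVec, Fintype.sum_prod_type, Finset.mul_sum,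
    mul_assoc, mul_comm (w _)]

lemma decoupledCoeff_dotProduct (θ : β → ℝ) (l : α → ℝ) (w : β ⊕ α → ℝ) :
    decoupledCoeff θ l ⬝ᵥ w = l2 l * (θ ⬝ᵥ (w ∘ Sum.inl)) + l2 θ * (l ⬝ᵥ (w ∘ Sum.inr)) := by
  simp only [decoupledCoeff, dotProduct, Fintype.sum_sum_type, Sum.elim_inl, Sum.elim_inr,
    Pi.smul_apply, smul_eq_mul, Finset.mul_sum, mul_assoc, Function.comp_apply]

lemma bilinearCoeff_dotProduct_sub (θ θ' : β → ℝ) (l l' : α → ℝ) :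
    bilinearCoeff θ l ⬝ᵥ bilinearCoeff θ' l' - decoupledCoeff θ l ⬝ᵥ decoupledCoeff θ' l'
      = (l2 θ * l2 θ' - θ ⬝ᵥ θ') * (l2 l * l2 l' - l ⬝ᵥ l') := by
  have hbilinear : l ⬝ᵥ (Function.curry (bilinearCoeff θ' l' ∘ Sum.inl) *ᵥ θ)
      = (l ⬝ᵥ l') * (θ ⬝ᵥ θ') := by
    simp only [bilinearCoeff, dotProduct, Matrix.mulVec, Function.curry, Function.comp_apply,
      Sum.elim_inl, Finset.sum_mul_sum]
    simp only [Finset.mul_sum]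
    exact Finset.sum_congr rfl fun i _ => Finset.sum_congr rfl fun j _ => by ring
  have hright : bilinearCoeff θ' l' (Sum.inr ()) = l2 θ' * l2 l' := rfl
  have hinl : decoupledCoeff θ' l' ∘ Sum.inl = l2 l' • θ' := rfl
  have hinr : decoupledCoeff θ' l' ∘ Sum.inr = l2 θ' • l' := rfl
  rw [bilinearCoeff_dotProduct, decoupledCoeff_dotProduct, hbilinear, hright, hinl, hinr,
    dotProduct_smul, dotProduct_smul, smul_eq_mul, smul_eq_mul]
  ring

lemma measurePreserving_sum_gaussianPi {γ : Type*} [Fintype γ] :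
    MeasurePreserving (fun w : α ⊕ γ → ℝ => (w ∘ Sum.inl, w ∘ Sum.inr))
      (gaussianPi (α ⊕ γ)) ((gaussianPi α).prod (gaussianPi γ)) :=
  measurePreserving_sumPiEquivProdPi (X := fun _ : α ⊕ γ => ℝ) fun _ => stdG

lemma measurePreserving_bilinear :
    MeasurePreserving
      (fun w : (α × β) ⊕ Unit → ℝ => (Function.curry (w ∘ Sum.inl), w (Sum.inr ())))
      (gaussianPi ((α × β) ⊕ Unit)) ((gaussianMatrix α β).prod stdG) :=
  (measurePreserving_curry_gaussianPi.prod (measurePreserving_funUnique stdG Unit)).comp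
    measurePreserving_sum_gaussianPi

variable (θ : ℕ × ℕ → β → ℝ) (l : ℕ × ℕ → α → ℝ) (d : ℕ × ℕ → ℝ)

/-- The extra Gaussian `z` of the bilinear process is removed by restricting to `z ≤ 0`. -/
lemma stdG_Iic_mul_le_bilinear :
    stdG (Iic 0) * gaussianMatrix α β
        {w | ∃ i, ∀ j, l (i, j) ⬝ᵥ (w *ᵥ θ (i, j)) + d (i, j) ≤ 0}
      ≤ gaussianPi ((α × β) ⊕ Unit)
        {w | ∃ i, ∀ j, bilinearCoeff (θ (i, j)) (l (i, j)) ⬝ᵥ w + d (i, j) ≤ 0} := by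
  let E : Set ((α → β → ℝ) × ℝ) := {q | ∃ i, ∀ j, l (i, j) ⬝ᵥ (q.1 *ᵥ θ (i, j))
    + l2 (θ (i, j)) * l2 (l (i, j)) * q.2 + d (i, j) ≤ 0}
  have hE : MeasurableSet E := measurableSet_exists_forall_nonpos
    (φ := fun a (q : (α → β → ℝ) × ℝ) => l a ⬝ᵥ (q.1 *ᵥ θ a) + l2 (θ a) * l2 (l a) * q.2 + d a)
    fun a => by fun_prop
  have hsubset : {w : α → β → ℝ | ∃ i, ∀ j, l (i, j) ⬝ᵥ (w *ᵥ θ (i, j)) + d (i, j) ≤ 0}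
      ×ˢ Iic (0 : ℝ) ⊆ E := by
    rintro ⟨w, z⟩ ⟨⟨i, hi⟩, hz⟩
    refine ⟨i, fun j => ?_⟩
    have hz' := mul_nonpos_of_nonneg_of_nonpos
      (mul_nonneg (l2_nonneg (θ (i, j))) (l2_nonneg (l (i, j)))) hz
    dsimp only at hz' ⊢
    linarith [hi j]
  calc _ = (gaussianMatrix α β).prod stdG (_ ×ˢ Iic 0) := by rw [Measure.prod_prod, mul_comm]
    _ ≤ (gaussianMatrix α β).prod stdG E := measure_mono hsubset
    _ = _ := by
      rw [← measurePreserving_bilinear.measure_preimage hE.nullMeasurableSet]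
      simp only [bilinearCoeff_dotProduct]
      rfl

lemma stdG_Iic_mul_gaussianMatrix_le
    (heq : ∀ a b, a.1 = b.1 →
      (l2 (θ a) * l2 (θ b) - θ a ⬝ᵥ θ b) * (l2 (l a) * l2 (l b) - l a ⬝ᵥ l b) = 0) :
    stdG (Iic 0) * gaussianMatrix α β
        {w | ∃ i, ∀ j, l (i, j) ⬝ᵥ (w *ᵥ θ (i, j)) + d (i, j) ≤ 0}
      ≤ (gaussianPi β).prod (gaussianPi α) {q | ∃ i, ∀ j, l2 (l (i, j)) * (θ (i, j) ⬝ᵥ q.1)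
          + l2 (θ (i, j)) * (l (i, j) ⬝ᵥ q.2) + d (i, j) ≤ 0} := by
  have hE := measurableSet_exists_forall_nonpos
    (φ := fun a (q : (β → ℝ) × (α → ℝ)) =>
      l2 (l a) * (θ a ⬝ᵥ q.1) + l2 (θ a) * (l a ⬝ᵥ q.2) + d a)
    fun a => by fun_prop
  refine (stdG_Iic_mul_le_bilinear θ l d).trans <|
    (measure_exists_forall_nonpos_le (fun a => bilinearCoeff (θ a) (l a))
      (fun a => decoupledCoeff (θ a) (l a)) (fun a b => ?_) (fun a b hab => ?_) d).trans ?_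
  · rw [← sub_nonneg, bilinearCoeff_dotProduct_sub]
    exact mul_nonneg (sub_nonneg.2 (dotProduct_le_l2_mul_l2 _ _))
      (sub_nonneg.2 (dotProduct_le_l2_mul_l2 _ _))
  · exact (sub_eq_zero.1 ((bilinearCoeff_dotProduct_sub _ _ _ _).trans (heq a b hab))).symm
  · rw [← measurePreserving_sum_gaussianPi.measure_preimage hE.nullMeasurableSet]
    simp only [decoupledCoeff_dotProduct]
    rfl

end Gordon

/-! ### The law of the signed features -/

section SignedLaw

variable {E F : Type*} [MeasurableSpace E] [MeasurableSpace F] [Neg E] [MeasurableNeg E]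
  [Neg F] [MeasurableNeg F] {ν : Measure E} {q : E → ℝ}

/-- The law of `y • x`, where `x` has law `ν` and the sign `y ∈ {+1, -1}` satisfies
`P(y = +1 | x) = q x`. -/
def signedLaw (ν : Measure E) (q : E → ℝ) : Measure E :=
  ν.withDensity (fun x => ENNReal.ofReal (q x))
    + (ν.withDensity fun x => ENNReal.ofReal (1 - q x)).map Neg.neg

lemma lintegral_signedLaw (hq : Measurable q) {φ : E → ENNReal} (hφ : Measurable φ) :
    ∫⁻ x, φ x ∂signedLaw ν q
      = ∫⁻ x, ENNReal.ofReal (q x) * φ x + ENNReal.ofReal (1 - q x) * φ (-x) ∂ν := by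
  rw [signedLaw, lintegral_add_measure, lintegral_map hφ measurable_neg,
    lintegral_withDensity_eq_lintegral_mul _ (by fun_prop) hφ,
    lintegral_withDensity_eq_lintegral_mul _ (by fun_prop) (by fun_prop),
    ← lintegral_add_left (by fun_prop)]
  rfl

lemma signedLaw_apply (hq : Measurable q) {s : Set E} (hs : MeasurableSet s) :
    signedLaw ν q s = ∫⁻ x, ENNReal.ofReal (q x) * s.indicator 1 x
      + ENNReal.ofReal (1 - q x) * s.indicator 1 (-x) ∂ν := by
  rw [← lintegral_indicator_one hs]
  exact lintegral_signedLaw hq (measurable_one.indicator hs)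

lemma ofReal_add_ofReal_one_sub {x : ℝ} (hx : x ∈ Icc (0 : ℝ) 1) :
    ENNReal.ofReal x + ENNReal.ofReal (1 - x) = 1 := by
  rw [← ENNReal.ofReal_add hx.1 (sub_nonneg.2 hx.2), add_sub_cancel, ENNReal.ofReal_one]

lemma isProbabilityMeasure_signedLaw [IsProbabilityMeasure ν] (hq : Measurable q)
    (hq01 : ∀ x, q x ∈ Icc (0 : ℝ) 1) : IsProbabilityMeasure (signedLaw ν q) := by
  constructor
  simp [signedLaw_apply hq MeasurableSet.univ, ofReal_add_ofReal_one_sub (hq01 _)]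

lemma signedLaw_map {L : E → F} (hL : Measurable L) (hodd : ∀ x, L (-x) = -L x) {q : F → ℝ}
    (hq : Measurable q) : signedLaw (ν.map L) q = (signedLaw ν fun x => q (L x)).map L := by
  refine Measure.ext_of_lintegral _ fun φ hφ => ?_
  rw [lintegral_signedLaw hq hφ, lintegral_map (by fun_prop) hL, lintegral_map hφ hL,
    lintegral_signedLaw (q := fun x => q (L x)) (hq.comp hL) (φ := fun x => φ (L x)) (hφ.comp hL)]
  simp only [hodd]

lemma signedLaw_prod {μ : Measure F} [SFinite ν] [SFinite μ] (hμ : μ.map Neg.neg = μ)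
    (hq : Measurable q) :
    signedLaw (ν.prod μ) (fun x => q x.1) = (signedLaw ν q).prod μ := by
  have hneg : ((ν.prod μ).withDensity fun x => ENNReal.ofReal (1 - q x.1)).map Neg.neg
      = ((ν.withDensity fun x => ENNReal.ofReal (1 - q x)).map Neg.neg).prod μ := by
    conv_rhs => rw [← hμ]
    rw [Measure.map_prod_map _ _ measurable_neg measurable_neg,
      prod_withDensity_left (f := fun x => ENNReal.ofReal (1 - q x)) (by fun_prop)]
    rfl
  rw [signedLaw, signedLaw, Measure.add_prod, hneg,
    prod_withDensity_left (f := fun x => ENNReal.ofReal (q x)) (by fun_prop)]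

lemma signedLaw_le (hq01 : ∀ x, q x ∈ Icc (0 : ℝ) 1) : signedLaw ν q ≤ ν + ν.map Neg.neg := by
  have hle {g : E → ENNReal} (hg : ∀ x, g x ≤ 1) : ν.withDensity g ≤ ν :=
    (withDensity_mono (ae_of_all _ hg)).trans_eq withDensity_one
  exact add_le_add (hle fun x => ENNReal.ofReal_le_one.2 (hq01 x).2)
    (Measure.map_mono (hle fun x => ENNReal.ofReal_le_one.2 (by linarith [(hq01 x).1]))
      measurable_neg)

lemma integrable_signedLaw (hq01 : ∀ x, q x ∈ Icc (0 : ℝ) 1) {φ : E → ℝ} (hφ : Measurable φ)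
    (hint : Integrable φ ν) (hint' : Integrable (fun x => φ (-x)) ν) :
    Integrable φ (signedLaw ν q) :=
  (hint.add_measure ((integrable_map_measure hφ.aestronglyMeasurable
    measurable_neg.aemeasurable).2 hint')).mono_measure (signedLaw_le hq01)

lemma integral_signedLaw (hq : Measurable q) (hq01 : ∀ x, q x ∈ Icc (0 : ℝ) 1) {φ : E → ℝ}
    (hφ : Measurable φ) (hint : Integrable φ ν) (hint' : Integrable (fun x => φ (-x)) ν) :
    ∫ x, φ x ∂signedLaw ν q = ∫ x, q x * φ x + (1 - q x) * φ (-x) ∂ν := by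
  have hsum := integrable_signedLaw hq01 hφ hint hint'
  have h1 : Integrable (fun x => q x * φ x) ν := hint.bdd_mul hq.aestronglyMeasurable
    (ae_of_all _ fun x => abs_le.2 ⟨by linarith [(hq01 x).1], (hq01 x).2⟩)
  have h2 : Integrable (fun x => (1 - q x) * φ (-x)) ν :=
    hint'.bdd_mul (c := 1) (by fun_prop) (ae_of_all _ fun x =>
      abs_le.2 ⟨by linarith [(hq01 x).2], by linarith [(hq01 x).1]⟩)
  rw [integral_add h1 h2, signedLaw, integral_add_measure hsum.left_of_add_measure
    hsum.right_of_add_measure, integral_map (by fun_prop) hφ.aestronglyMeasurable,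
    integral_withDensity_eq_integral_toReal_smul (by fun_prop) (by simp),
    integral_withDensity_eq_integral_toReal_smul (by fun_prop) (by simp)]
  simp only [ENNReal.toReal_ofReal (hq01 _).1, ENNReal.toReal_ofReal (sub_nonneg.2 (hq01 _).2),
    smul_eq_mul]

end SignedLaw

section DataLaw

lemma signBer_apply (q : ℝ) {s : Set ℝ} (hs : MeasurableSet s) :
    signBer q s
      = ENNReal.ofReal q * s.indicator 1 1 + ENNReal.ofReal (1 - q) * s.indicator 1 (-1) := by
  simp [signBer, Measure.dirac_apply' _ hs]

lemma isProbabilityMeasure_signBer {q : ℝ} (hq : q ∈ Icc (0 : ℝ) 1) :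
    IsProbabilityMeasure (signBer q) := by
  constructor
  simp [signBer_apply q MeasurableSet.univ, ofReal_add_ofReal_one_sub hq]

lemma lintegral_pi_prod {ι E : Type*} [Fintype ι] [MeasurableSpace E] (ν : Measure E)
    [IsProbabilityMeasure ν] {g : ι → E → ENNReal} (hg : ∀ i, Measurable (g i)) :
    ∫⁻ x, ∏ i, g i (x i) ∂(Measure.pi fun _ : ι => ν) = ∏ i, ∫⁻ x, g i x ∂ν := by
  have hind : iIndepFun (fun i (x : ι → E) => g i (x i)) (Measure.pi fun _ : ι => ν) :=
    iIndepFun_pi (μ := fun _ : ι => ν) (X := g) fun i => (hg i).aemeasurable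
  rw [lintegral_prod_eq_prod_lintegral_of_indepFun Finset.univ _ hind
    fun i => (hg i).comp (measurable_pi_apply i)]
  exact Finset.prod_congr rfl fun i _ =>
    (measurePreserving_eval (fun _ : ι => ν) i).lintegral_comp (hg i)

variable {n p : ℕ} {f : ℝ → ℝ} {θ : Fin p → ℝ}

lemma measurable_map_prodMk_pi_signBer (hf : Measurable f) (hf01 : ∀ x, f x ∈ Icc (0 : ℝ) 1) :
    Measurable fun xs : Fin n → Fin p → ℝ =>
      (Measure.pi fun i : Fin n => signBer (f (∑ j, θ j * xs i j))).map fun ys => (xs, ys) := by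
  have hprob (x) : IsProbabilityMeasure (signBer (f x)) := isProbabilityMeasure_signBer (hf01 x)
  have hpi : Measurable fun xs : Fin n → Fin p → ℝ =>
      Measure.pi fun i : Fin n => signBer (f (∑ j, θ j * xs i j)) := by
    refine .measure_of_isPiSystem_of_isProbabilityMeasure generateFrom_pi.symm isPiSystem_pi ?_
    rintro _ ⟨s, hs, rfl⟩
    simp only [Measure.pi_pi, signBer_apply _ (hs _ (mem_univ _))]
    fun_prop
  let labels : Kernel (Fin n → Fin p → ℝ) (Fin n → ℝ) := ⟨_, hpi⟩
  have : IsMarkovKernel labels :=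
    ⟨fun xs => inferInstanceAs (IsProbabilityMeasure
      (Measure.pi fun i : Fin n => signBer (f (∑ j, θ j * xs i j))))⟩
  convert (Kernel.id ×ₖ labels).measurable using 2 with xs
  rw [Kernel.prod_apply, Kernel.id_apply, Measure.dirac_prod]
  rfl

lemma pi_signBer_preimage (hf01 : ∀ x, f x ∈ Icc (0 : ℝ) 1) (xs : Fin n → Fin p → ℝ)
    {s : Fin n → Set (Fin p → ℝ)} (hs : ∀ i, MeasurableSet (s i)) :
    (Measure.pi fun i : Fin n => signBer (f (∑ j, θ j * xs i j)))
        {ys | (fun i => ys i • xs i) ∈ univ.pi s}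
      = ∏ i, (ENNReal.ofReal (f (θ ⬝ᵥ xs i)) * (s i).indicator 1 (xs i)
          + ENNReal.ofReal (1 - f (θ ⬝ᵥ xs i)) * (s i).indicator 1 (-xs i)) := by
  have hprob (x) : IsProbabilityMeasure (signBer (f x)) := isProbabilityMeasure_signBer (hf01 x)
  have hevent : {ys : Fin n → ℝ | (fun i => ys i • xs i) ∈ univ.pi s}
      = univ.pi fun i => (fun y : ℝ => y • xs i) ⁻¹' s i := by
    ext ys
    simp only [mem_ofPred_eq, mem_univ_pi, mem_preimage]
  rw [hevent, Measure.pi_pi]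
  refine Finset.prod_congr rfl fun i _ => ?_
  have hmeas : Measurable fun y : ℝ => y • xs i := by fun_prop
  rw [signBer_apply _ (hmeas (hs i)), dotProduct]
  have hcomp (y : ℝ) : ((fun y : ℝ => y • xs i) ⁻¹' s i).indicator (1 : ℝ → ENNReal) y
      = (s i).indicator (1 : (Fin p → ℝ) → ENNReal) (y • xs i) :=
    indicator_comp_right (g := 1) fun y : ℝ => y • xs i
  rw [hcomp, hcomp, one_smul, neg_one_smul]

/-- The data enter the margin only through the products `yᵢ xᵢ`, which are independent. -/
lemma map_smul_dataLaw (hf : Measurable f) (hf01 : ∀ x, f x ∈ Icc (0 : ℝ) 1)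
    (ν : Measure (Fin p → ℝ)) [IsProbabilityMeasure ν] :
    (dataLaw n p f θ ν).map (fun q i => q.2 i • q.1 i)
      = Measure.pi fun _ : Fin n => signedLaw ν fun x => f (θ ⬝ᵥ x) := by
  have hq : Measurable fun x => f (θ ⬝ᵥ x) := by fun_prop
  have := isProbabilityMeasure_signedLaw (ν := ν) hq fun x => hf01 _
  have hmeas : Measurable fun (q : (Fin n → Fin p → ℝ) × (Fin n → ℝ)) i => q.2 i • q.1 i := by
    fun_prop
  refine (Measure.pi_eq fun s hs => ?_).symm
  rw [Measure.map_apply hmeas (.univ_pi hs), dataLaw,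
    Measure.bind_apply (hmeas (.univ_pi hs))
      (measurable_map_prodMk_pi_signBer hf hf01).aemeasurable]
  simp_rw [Measure.map_apply measurable_prodMk_left (hmeas (.univ_pi hs)),
    signedLaw_apply hq (hs _)]
  have hg (i : Fin n) : Measurable fun x => ENNReal.ofReal (f (θ ⬝ᵥ x)) * (s i).indicator 1 x
      + ENNReal.ofReal (1 - f (θ ⬝ᵥ x)) * (s i).indicator 1 (-x) :=
    (hq.ennreal_ofReal.mul (measurable_one.indicator (hs i))).add
      ((measurable_const.sub hq).ennreal_ofReal.mul
        ((measurable_one.indicator (hs i)).comp measurable_neg))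
  rw [← lintegral_pi_prod ν hg]
  exact lintegral_congr fun xs => pi_signBer_preimage hf01 xs hs

end DataLaw

/-! ### Gaussian features as a spike plus independent noise -/

section Features

open scoped Matrix

variable {K : Type*} [Fintype K]

lemma ext_of_map_dotProduct {μ ν : Measure (K → ℝ)} [IsFiniteMeasure μ] [IsFiniteMeasure ν]
    (h : ∀ a : K → ℝ, μ.map (a ⬝ᵥ ·) = ν.map (a ⬝ᵥ ·)) : μ = ν := by
  classical
  refine Measure.ext_of_charFunDual (funext fun L => ?_)
  have hL : ⇑L = ((fun i => L (Pi.single i 1)) ⬝ᵥ ·) := by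
    ext x
    conv_lhs => rw [pi_eq_sum_univ' x, map_sum]
    exact Finset.sum_congr rfl fun i _ => by simp [mul_comm]
  rw [charFunDual_eq_charFun_map_one, charFunDual_eq_charFun_map_one, hL, h]

lemma map_dotProduct_gaussianPi (a : K → ℝ) :
    (gaussianPi K).map (a ⬝ᵥ ·) = gaussianReal 0 (a ⬝ᵥ a).toNNReal := by
  let L := innerSL ℝ (WithLp.toLp 2 a)
  have hL : (L ∘ WithLp.toLp 2 : (K → ℝ) → ℝ) = (a ⬝ᵥ ·) := by
    ext x
    simp [L, PiLp.inner_apply, dotProduct, mul_comm]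
  have hnorm : ‖L‖ ^ 2 = a ⬝ᵥ a := by
    rw [innerSL_apply_norm, EuclideanSpace.real_norm_sq_eq]
    simp only [dotProduct, sq]
  rw [← hL, ← Measure.map_map L.continuous.measurable (by fun_prop)]
  have hstd : (gaussianPi K).map (WithLp.toLp 2) = stdGaussian (EuclideanSpace ℝ K) :=
    map_pi_eq_stdGaussian
  rw [hstd, IsGaussian.map_eq_gaussianReal, integral_strongDual_stdGaussian,
    variance_dual_stdGaussian, hnorm]

lemma map_mul_add_dotProduct_stdG_prod (c : ℝ) (a : K → ℝ) :
    (stdG.prod (gaussianPi K)).map (fun q => c * q.1 + a ⬝ᵥ q.2)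
      = gaussianReal 0 (c ^ 2 + a ⬝ᵥ a).toNNReal := by
  have hind : (fun q : ℝ × (K → ℝ) => c * q.1) ⟂ᵢ[stdG.prod (gaussianPi K)]
      fun q => a ⬝ᵥ q.2 :=
    indepFun_prod (X := (c * ·)) (Y := (a ⬝ᵥ ·)) (by fun_prop) (by fun_prop)
  have hfst : (stdG.prod (gaussianPi K)).map (fun q => c * q.1)
      = gaussianReal 0 (c ^ 2).toNNReal := by
    rw [← Function.comp_def (c * ·) Prod.fst, ← Measure.map_map (by fun_prop) (by fun_prop),
      Measure.map_fst_prod, measure_univ, one_smul, stdG, gaussianReal_map_const_mul, mul_zero,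
      mul_one, toNNReal_of_nonneg (sq_nonneg c)]
  have hsnd : (stdG.prod (gaussianPi K)).map (fun q => a ⬝ᵥ q.2)
      = gaussianReal 0 (a ⬝ᵥ a).toNNReal := by
    rw [← Function.comp_def (a ⬝ᵥ ·) Prod.snd, ← Measure.map_map (by fun_prop) (by fun_prop),
      Measure.map_snd_prod, measure_univ, one_smul, map_dotProduct_gaussianPi]
  have h := gaussianReal_add_gaussianReal_of_indepFun hind hfst hsnd
  rwa [add_zero, ← toNNReal_add (sq_nonneg c) (by rw [← l2_sq]; positivity)] at h

lemma map_neg_stdG : stdG.map Neg.neg = stdG :=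
  gaussianReal_map_neg.trans (by rw [neg_zero, stdG])

lemma map_neg_gaussianPi : (gaussianPi K).map Neg.neg = gaussianPi K :=
  (measurePreserving_pi (fun _ : K => stdG) (fun _ : K => stdG) (f := fun _ => Neg.neg)
    fun _ => ⟨measurable_neg, map_neg_stdG⟩).map_eq

/-- The orthogonal projection of `g` onto the complement of the unit vector `u`. -/
def perp (u g : K → ℝ) : K → ℝ := g - (u ⬝ᵥ g) • u

lemma perp_dotProduct_comm (u g h : K → ℝ) : perp u g ⬝ᵥ h = g ⬝ᵥ perp u h := by
  simp only [perp, sub_dotProduct, dotProduct_sub, smul_dotProduct, dotProduct_smul, smul_eq_mul,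
    dotProduct_comm g u]
  ring

lemma dotProduct_perp_self {u : K → ℝ} (hu : u ⬝ᵥ u = 1) (g : K → ℝ) : u ⬝ᵥ perp u g = 0 := by
  simp [perp, hu]

lemma perp_perp {u : K → ℝ} (hu : u ⬝ᵥ u = 1) (g : K → ℝ) : perp u (perp u g) = perp u g := by
  rw [perp, dotProduct_perp_self hu, zero_smul, sub_zero]

lemma l2_perp_sq {u : K → ℝ} (hu : u ⬝ᵥ u = 1) (g : K → ℝ) :
    l2 (perp u g) ^ 2 = l2 g ^ 2 - (u ⬝ᵥ g) ^ 2 := by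
  rw [l2_sq, l2_sq, perp_dotProduct_comm, perp_perp hu, perp, dotProduct_sub, dotProduct_smul,
    dotProduct_comm g u, smul_eq_mul, sq]

@[fun_prop]
lemma continuous_perp (u : K → ℝ) : Continuous (perp u) := by
  unfold perp dotProduct
  fun_prop

@[fun_prop]
lemma measurable_perp (u : K → ℝ) : Measurable (perp u) := (continuous_perp u).measurable

lemma map_spike_stdG_prod {u : K → ℝ} (hu : u ⬝ᵥ u = 1) :
    (stdG.prod (gaussianPi K)).map (fun q => q.1 • u + perp u q.2) = gaussianPi K := by
  have hmeas : Measurable fun q : ℝ × (K → ℝ) => q.1 • u + perp u q.2 := by fun_prop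
  have := Measure.isFiniteMeasure_map (stdG.prod (gaussianPi K)) fun q => q.1 • u + perp u q.2
  refine ext_of_map_dotProduct fun a => ?_
  have hlin : (a ⬝ᵥ ·) ∘ (fun q : ℝ × (K → ℝ) => q.1 • u + perp u q.2)
      = fun q => (u ⬝ᵥ a) * q.1 + perp u a ⬝ᵥ q.2 := by
    ext q
    simp [dotProduct_add, perp_dotProduct_comm, dotProduct_comm a u, mul_comm]
  rw [Measure.map_map (by fun_prop) hmeas, hlin, map_mul_add_dotProduct_stdG_prod, ← l2_sq,
    l2_perp_sq hu, add_sub_cancel, l2_sq, map_dotProduct_gaussianPi]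

lemma map_mulVec_gaussianPi {p : ℕ} {S : Matrix (Fin p) (Fin p) ℝ} {ν : Measure (Fin p → ℝ)}
    [IsProbabilityMeasure ν] (hν : IsCGauss ν S) {A : Matrix (Fin p) K ℝ} (hA : A * Aᵀ = S) :
    (gaussianPi K).map (A *ᵥ ·) = ν := by
  have hmeas : Measurable fun g : K → ℝ => A *ᵥ g := by fun_prop
  have := Measure.isFiniteMeasure_map (gaussianPi K) fun g => A *ᵥ g
  refine ext_of_map_dotProduct fun a => ?_
  have hlin : (a ⬝ᵥ ·) ∘ (fun g : K → ℝ => A *ᵥ g) = ((a ᵥ* A) ⬝ᵥ ·) :=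
    funext fun g => Matrix.dotProduct_mulVec a A g
  have hvar : (a ᵥ* A) ⬝ᵥ (a ᵥ* A) = ∑ i, ∑ j, a i * S i j * a j := by
    rw [← Matrix.dotProduct_mulVec, ← Matrix.mulVec_transpose, Matrix.mulVec_mulVec, hA]
    simp only [dotProduct, Matrix.mulVec, Finset.mul_sum, mul_assoc]
  rw [Measure.map_map (by fun_prop) hmeas, hlin, map_dotProduct_gaussianPi, hvar]
  exact (hν a).symm

/-- The sample `A (τᵢ u + gᵢ - ⟨u, gᵢ⟩ u)`, `i ∈ α`, built from signed spikes `τ` and noise `g`. -/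
def spikedSample {α J : Type*} (A : Matrix J K ℝ) (u : K → ℝ) (q : (α → ℝ) × (α → K → ℝ)) :
    α → J → ℝ :=
  fun i => A *ᵥ (q.1 i • u + perp u (q.2 i))

/-- A factor `A` of the covariance matrix `S` which maps the signal `θ` to `r` times the unit
vector `u`: in the coordinates `x = A g` the label depends on `⟨u, g⟩` only. -/
structure IsSpikeFactor {J : Type*} [Fintype J] (A : Matrix J K ℝ) (S : Matrix J J ℝ) (θ : J → ℝ)
    (r : ℝ) (u : K → ℝ) : Prop where
  mul_transpose : A * Aᵀ = S
  unit : u ⬝ᵥ u = 1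
  vecMul_eq : θ ᵥ* A = r • u

variable {n p : ℕ} {f : ℝ → ℝ} {θ : Fin p → ℝ} {r : ℝ} {A : Matrix (Fin p) K ℝ} {u : K → ℝ}
  {S : Matrix (Fin p) (Fin p) ℝ} {ν : Measure (Fin p → ℝ)}

lemma signedLaw_eq_map_spike (hf : Measurable f) (hA : IsSpikeFactor A S θ r u)
    [IsProbabilityMeasure ν] (hν : IsCGauss ν S) :
    signedLaw ν (fun x => f (θ ⬝ᵥ x))
      = ((signedLaw stdG fun t => f (r * t)).prod (gaussianPi K)).map
        (fun q => A *ᵥ (q.1 • u + perp u q.2)) := by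
  have hmeas : Measurable fun q : ℝ × (K → ℝ) => A *ᵥ (q.1 • u + perp u q.2) := by fun_prop
  have hsignal (q : ℝ × (K → ℝ)) : θ ⬝ᵥ A *ᵥ (q.1 • u + perp u q.2) = r * q.1 := by
    rw [Matrix.dotProduct_mulVec, hA.vecMul_eq, smul_dotProduct, dotProduct_add,
      dotProduct_perp_self hA.unit, dotProduct_smul, hA.unit]
    simp
  have hodd (q : ℝ × (K → ℝ)) : A *ᵥ ((-q).1 • u + perp u (-q).2)
      = -(A *ᵥ (q.1 • u + perp u q.2)) := by
    rw [← Matrix.mulVec_neg]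
    simp only [perp, Prod.fst_neg, Prod.snd_neg, neg_smul, dotProduct_neg, neg_add_rev]
    congr 1
    abel
  have hν' : (stdG.prod (gaussianPi K)).map (fun q => A *ᵥ (q.1 • u + perp u q.2)) = ν := by
    rw [← map_mulVec_gaussianPi hν hA.mul_transpose]
    conv_rhs => rw [← map_spike_stdG_prod hA.unit,
      Measure.map_map (by fun_prop) (by fun_prop)]
    rfl
  rw [← hν', signedLaw_map hmeas hodd (by fun_prop)]
  simp only [hsignal]
  rw [signedLaw_prod (q := fun t => f (r * t)) map_neg_gaussianPi (by fun_prop)]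

lemma dataLaw_preimage (hf : Measurable f) (hf01 : ∀ x, f x ∈ Icc (0 : ℝ) 1)
    (hA : IsSpikeFactor A S θ r u) [IsProbabilityMeasure ν] (hν : IsCGauss ν S)
    {E : Set (Fin n → Fin p → ℝ)} (hE : MeasurableSet E) :
    dataLaw n p f θ ν ((fun q i => q.2 i • q.1 i) ⁻¹' E)
      = ((Measure.pi fun _ : Fin n => signedLaw stdG fun t => f (r * t)).prod
          (gaussianMatrix (Fin n) K)) (spikedSample A u ⁻¹' E) := by
  have hprob : IsProbabilityMeasure (signedLaw stdG fun t => f (r * t)) :=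
    isProbabilityMeasure_signedLaw (by fun_prop) fun t => hf01 _
  have hspike : Measurable fun q : ℝ × (K → ℝ) => A *ᵥ (q.1 • u + perp u q.2) := by fun_prop
  have hmeas : Measurable (spikedSample (α := Fin n) A u) := by unfold spikedSample; fun_prop
  have hswap := measurePreserving_arrowProdEquivProdArrow ℝ (K → ℝ) (Fin n)
    (fun _ => signedLaw stdG fun t => f (r * t)) fun _ => gaussianPi K
  rw [← Measure.map_apply (by fun_prop) hE, map_smul_dataLaw hf hf01,
    signedLaw_eq_map_spike hf hA hν, ← hswap.measure_preimage (hmeas hE).nullMeasurableSet,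
    ← Measure.pi_map_pi fun _ => hspike.aemeasurable, Measure.map_apply (by fun_prop) hE]
  rfl

end Features

/-! ### Duality for the margin -/

section Duality

open scoped Matrix

lemma exists_norm_eq_one_forall_le_inner {E : Type*} [NormedAddCommGroup E]
    [InnerProductSpace ℝ E] {K : Set E} (hne : K.Nonempty) (hcomplete : IsComplete K)
    (hconvex : Convex ℝ K) {κ : ℝ} (hκ : 0 < κ) (hK : ∀ z ∈ K, κ ≤ ‖z‖) :
    ∃ θ : E, ‖θ‖ = 1 ∧ ∀ w ∈ K, κ ≤ inner ℝ θ w := by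
  obtain ⟨z, hz, hmin⟩ := exists_norm_eq_iInf_of_complete_convex hne hcomplete hconvex 0
  rw [norm_eq_iInf_iff_real_inner_le_zero hconvex hz] at hmin
  have hpos : 0 < ‖z‖ := hκ.trans_le (hK z hz)
  refine ⟨‖z‖⁻¹ • z, norm_smul_inv_norm (𝕜 := ℝ) (norm_pos_iff.1 hpos), fun w hw => ?_⟩
  have hsq : ‖z‖ ^ 2 ≤ inner ℝ z w := by
    have h := hmin w hw
    rw [zero_sub, inner_neg_left, inner_sub_right, real_inner_self_eq_norm_sq] at h
    linarith
  rw [real_inner_smul_left, le_inv_mul_iff₀ hpos]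
  nlinarith [hK z hz]

lemma l2_eq_norm {ι : Type*} [Fintype ι] (v : ι → ℝ) : l2 v = ‖WithLp.toLp 2 v‖ := by
  simp [l2, EuclideanSpace.norm_eq]

lemma exists_l2_eq_one_forall_le_dotProduct {α β : Type*} [Fintype α] [Fintype β] [Nonempty α]
    {W : Matrix α β ℝ} {κ : ℝ} (hκ : 0 < κ) (h : ∀ l ∈ stdSimplex ℝ α, κ ≤ l2 (l ᵥ* W)) :
    ∃ θ : β → ℝ, l2 θ = 1 ∧ ∀ i, κ ≤ θ ⬝ᵥ W i := by
  classical
  let L : (α → ℝ) →ₗ[ℝ] EuclideanSpace ℝ β :=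
    (WithLp.linearEquiv 2 ℝ (β → ℝ)).symm.toLinearMap ∘ₗ W.vecMulLinear
  have hL (l : α → ℝ) : L l = WithLp.toLp 2 (l ᵥ* W) := rfl
  have hcompact : IsCompact (L '' stdSimplex ℝ α) :=
    (isCompact_stdSimplex ℝ α).image L.continuous_of_finiteDimensional
  obtain ⟨θ, hθ, hle⟩ := exists_norm_eq_one_forall_le_inner
    (Nonempty.image L ⟨_, single_mem_stdSimplex ℝ (Classical.arbitrary α)⟩) hcompact.isComplete
    ((convex_stdSimplex ℝ α).linear_image L) hκ (by
      rintro _ ⟨l, hl, rfl⟩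
      rw [hL, ← l2_eq_norm]
      exact h l hl)
  refine ⟨θ.ofLp, by rw [l2_eq_norm]; exact hθ, fun i => ?_⟩
  have hi := hle _ ⟨Pi.single i 1, single_mem_stdSimplex ℝ i, rfl⟩
  rw [hL, Matrix.single_one_vecMul, EuclideanSpace.inner_eq_star_dotProduct] at hi
  rw [dotProduct_comm]
  exact hi

variable {n p : ℕ} {xs : Fin n → Fin p → ℝ} {ys : Fin n → ℝ} {κ : ℝ}

lemma mul_sum_eq_dotProduct_smul (θ : Fin p → ℝ) (i : Fin n) :
    ys i * ∑ j, θ j * xs i j = θ ⬝ᵥ (ys i • xs i) := (dotProduct_smul (ys i) θ (xs i)).symm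

lemma exists_forall_lt_of_lt_margin (hκ : 0 ≤ κ) (h : κ < margin n p xs ys) :
    ∃ θ : Fin p → ℝ, l2 θ = 1 ∧ ∀ i, κ < θ ⬝ᵥ (ys i • xs i) := by
  have hne : ((fun θ : Fin p → ℝ => ⨅ i : Fin n, ys i * ∑ j, θ j * xs i j)
      '' {θ | l2 θ = 1}).Nonempty := by
    by_contra! hempty
    rw [margin, hempty, Real.sSup_empty] at h
    exact h.not_ge hκ
  obtain ⟨_, ⟨θ, hθ, rfl⟩, hlt⟩ := exists_lt_of_lt_csSup hne h
  refine ⟨θ, hθ, fun i => hlt.trans_le ?_⟩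
  rw [← mul_sum_eq_dotProduct_smul]
  exact ciInf_le (finite_range _).bddBelow i

lemma le_margin [NeZero n] {θ : Fin p → ℝ} (hθ : l2 θ = 1) (h : ∀ i, κ ≤ θ ⬝ᵥ (ys i • xs i)) :
    κ ≤ margin n p xs ys := by
  have hbdd : BddAbove ((fun θ : Fin p → ℝ => ⨅ i : Fin n, ys i * ∑ j, θ j * xs i j)
      '' {θ | l2 θ = 1}) := by
    refine ⟨l2 (ys 0 • xs 0), ?_⟩
    rintro _ ⟨η, hη, rfl⟩
    refine (ciInf_le (finite_range _).bddBelow 0).trans ?_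
    have hη : l2 η = 1 := hη
    simpa only [mul_sum_eq_dotProduct_smul, hη, one_mul]
      using dotProduct_le_l2_mul_l2 η (ys 0 • xs 0)
  refine le_csSup_of_le hbdd ⟨θ, hθ, rfl⟩ (le_ciInf fun i => ?_)
  rw [mul_sum_eq_dotProduct_smul]
  exact h i

lemma one_le_card_mul_l2_sq {α : Type*} [Fintype α] {l : α → ℝ} (hl : l ∈ stdSimplex ℝ α) :
    1 ≤ Fintype.card α * l2 l ^ 2 := by
  have h := sq_sum_le_card_mul_sum_sq (s := Finset.univ) (f := l)
  rw [hl.2] at h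
  rw [l2_sq]
  simpa [dotProduct, sq] using h

lemma le_margin_of_forall_nonneg [NeZero n] (hκ : 0 < κ)
    (h : ∀ l : Fin n → ℝ, (∀ i, 0 ≤ l i) →
      κ ^ 2 * n * l2 l ^ 2 ≤ l2 (l ᵥ* fun i => ys i • xs i) ^ 2) :
    κ ≤ margin n p xs ys := by
  obtain ⟨θ, hθ, hle⟩ := exists_l2_eq_one_forall_le_dotProduct
    (W := fun i => ys i • xs i) hκ fun l hl => by
      refine abs_le_of_sq_le_sq' ?_ (l2_nonneg _) |>.2
      have h1 := one_le_card_mul_l2_sq hl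
      rw [Fintype.card_fin] at h1
      calc κ ^ 2 ≤ κ ^ 2 * (n * l2 l ^ 2) := le_mul_of_one_le_right (sq_nonneg κ) h1
        _ = κ ^ 2 * n * l2 l ^ 2 := (mul_assoc _ _ _).symm
        _ ≤ _ := h l hl.1
  exact le_margin hθ hle

end Duality

/-! ### Gaussian bounds for the primal and the dual problem -/

section Comparison

open scoped Matrix

variable {α β : Type*} [Fintype α] [Fintype β]

lemma stdG_Iic_mul_gaussianMatrix_le_of_separable {X Y : Type*} [TopologicalSpace X]
    [TopologicalSpace Y] [TopologicalSpace.SeparableSpace X] [TopologicalSpace.SeparableSpace Y]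
    [Nonempty Y] {θ : X → Y → β → ℝ} {l : X → Y → α → ℝ} {d : X → Y → ℝ}
    (hθ : ∀ x, Continuous (θ x)) (hl : ∀ x, Continuous (l x)) (hd : ∀ x, Continuous (d x))
    (heq : ∀ x y y', (l2 (θ x y) * l2 (θ x y') - θ x y ⬝ᵥ θ x y')
      * (l2 (l x y) * l2 (l x y') - l x y ⬝ᵥ l x y') = 0) :
    stdG (Iic 0) * gaussianMatrix α β
        {w | (interior {x | ∀ y, l x y ⬝ᵥ (w *ᵥ θ x y) + d x y ≤ 0}).Nonempty}
      ≤ (gaussianPi β).prod (gaussianPi α) {q | ∃ x, ∀ y,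
          l2 (l x y) * (θ x y ⬝ᵥ q.1) + l2 (θ x y) * (l x y ⬝ᵥ q.2) + d x y ≤ 0} := by
  rcases isEmpty_or_nonempty X with hX | hX
  · simp [Set.eq_empty_of_isEmpty]
  let D := TopologicalSpace.denseSeq X
  let T := TopologicalSpace.denseSeq Y
  refine le_trans ?_ ((stdG_Iic_mul_gaussianMatrix_le (fun a => θ (D a.1) (T a.2))
    (fun a => l (D a.1) (T a.2)) (fun a => d (D a.1) (T a.2)) ?_).trans ?_)
  · gcongr with w
    intro hw
    obtain ⟨i, hi⟩ := (TopologicalSpace.denseRange_denseSeq X).exists_mem_open isOpen_interior hw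
    exact ⟨i, fun j => interior_subset hi (T j)⟩
  · rintro ⟨i, j⟩ ⟨_, j'⟩ rfl
    exact heq (D i) (T j) (T j')
  · refine measure_mono ?_
    rintro q ⟨i, hi⟩
    have hclosed : IsClosed {y | l2 (l (D i) y) * (θ (D i) y ⬝ᵥ q.1)
        + l2 (θ (D i) y) * (l (D i) y ⬝ᵥ q.2) + d (D i) y ≤ 0} :=
      isClosed_le ((((continuous_l2.comp (hl _)).mul ((hθ _).dotProduct continuous_const)).add
        ((continuous_l2.comp (hθ _)).mul ((hl _).dotProduct continuous_const))).add (hd _))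
        continuous_const
    exact ⟨D i, fun y => (TopologicalSpace.denseRange_denseSeq Y).induction_on y hclosed hi⟩

lemma l2_sup_zero_sq (v : α → ℝ) : l2 (v ⊔ 0) ^ 2 = (v ⊔ 0) ⬝ᵥ v := by
  rw [l2_sq]
  refine Finset.sum_congr rfl fun i _ => ?_
  rcases le_total (v i) 0 with hi | hi <;> simp [hi]

lemma l2_sup_zero_le {v : α → ℝ} {b : ℝ} (hb : 0 ≤ b) (h : (v ⊔ 0) ⬝ᵥ v ≤ l2 (v ⊔ 0) * b) :
    l2 (v ⊔ 0) ≤ b := by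
  rw [← l2_sup_zero_sq, sq] at h
  rcases (l2_nonneg (v ⊔ 0)).eq_or_lt with h0 | h0
  · exact h0.symm.trans_le hb
  · exact le_of_mul_le_mul_left h h0

lemma stdG_Iic_mul_gaussianMatrix_exists_lt_le (t : α → ℝ) (C κ : ℝ) :
    stdG (Iic 0) * gaussianMatrix α β
        {w | ∃ (a : ℝ) (θ : β → ℝ), a ^ 2 + l2 θ ^ 2 ≤ C ∧ ∀ i, κ < a * t i + (w *ᵥ θ) i}
      ≤ (gaussianPi β).prod (gaussianPi α)
        {q | ∃ a s : ℝ, 0 ≤ s ∧ a ^ 2 + s ^ 2 ≤ C ∧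
          l2 ((fun i => κ - a * t i + s * q.2 i) ⊔ 0) ≤ s * l2 q.1} := by
  have hsup : Continuous fun y : α → ℝ => y ⊔ 0 :=
    continuous_pi fun i => (continuous_apply i).sup continuous_const
  have key := stdG_Iic_mul_gaussianMatrix_le_of_separable
    (X := {x : ℝ × (β → ℝ) // x.1 ^ 2 + l2 x.2 ^ 2 ≤ C}) (Y := α → ℝ)
    (θ := fun x _ => -x.1.2) (l := fun _ y => y ⊔ 0)
    (d := fun x y => (y ⊔ 0) ⬝ᵥ fun i => κ - x.1.1 * t i)
    (fun _ => continuous_const) (fun _ => hsup) (fun _ => hsup.dotProduct continuous_const)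
    fun x y y' => by rw [← l2_sq, sq, sub_self, zero_mul]
  refine le_trans ?_ (key.trans (measure_mono ?_))
  · gcongr with w
    rintro ⟨a, θ, hC, hw⟩
    have hopen : IsOpen {x : {x : ℝ × (β → ℝ) // x.1 ^ 2 + l2 x.2 ^ 2 ≤ C} |
        ∀ i, κ < x.1.1 * t i + (w *ᵥ x.1.2) i} := by
      rw [ofPred_forall]
      exact isOpen_iInter_of_finite fun i => isOpen_lt continuous_const
        (by unfold Matrix.mulVec dotProduct; fun_prop)
    refine ⟨⟨(a, θ), hC⟩, mem_interior.2 ⟨_, fun x hx y => ?_, hopen, hw⟩⟩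
    rw [Matrix.mulVec_neg x.1.2 w, dotProduct_neg, neg_add_nonpos_iff]
    exact dotProduct_le_dotProduct_of_nonneg_left
      (fun i => sub_le_iff_le_add'.2 (hx i).le) le_sup_right
  · rintro ⟨g, h⟩ ⟨⟨⟨a, θ⟩, hC⟩, hy⟩
    refine ⟨a, l2 θ, l2_nonneg θ, hC, l2_sup_zero_le
      (mul_nonneg (l2_nonneg θ) (l2_nonneg g)) ?_⟩
    set v : α → ℝ := fun i => κ - a * t i + l2 θ * h i with hv
    have hsplit : (v ⊔ 0) ⬝ᵥ v
        = l2 θ * ((v ⊔ 0) ⬝ᵥ h) + (v ⊔ 0) ⬝ᵥ fun i => κ - a * t i := by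
      rw [← smul_eq_mul, ← dotProduct_smul, ← dotProduct_add]
      congr 1
      ext i
      simp [hv, add_comm]
    have hneg : l2 (-θ) = l2 θ := by simp [l2]
    have hgordon := hy v
    simp only [neg_dotProduct, hneg] at hgordon
    nlinarith [dotProduct_le_l2_mul_l2 θ g, l2_nonneg (v ⊔ 0)]

lemma add_mul_le_mul_of_sq_add_sq_le {a b c δ E L : ℝ} (hδ : δ ^ 2 * (1 + c ^ 2) ≤ E ^ 2)
    (hE : 0 ≤ E) (hL : 0 ≤ L) (h : a ^ 2 + b ^ 2 ≤ δ ^ 2 * L ^ 2) : b + c * a ≤ E * L := by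
  refine (le_abs_self _).trans (abs_le_of_sq_le_sq ?_ (mul_nonneg hE hL))
  calc (b + c * a) ^ 2 ≤ (1 + c ^ 2) * (a ^ 2 + b ^ 2) := by linarith [sq_nonneg (a - c * b)]
    _ ≤ (1 + c ^ 2) * (δ ^ 2 * L ^ 2) := by gcongr
    _ = δ ^ 2 * (1 + c ^ 2) * L ^ 2 := by ring
    _ ≤ E ^ 2 * L ^ 2 := by gcongr
    _ = (E * L) ^ 2 := by ring

lemma perp_dotProduct_perp {u : β → ℝ} (hu : u ⬝ᵥ u = 1) (g h : β → ℝ) :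
    perp u g ⬝ᵥ perp u h = g ⬝ᵥ perp u h := by
  rw [perp_dotProduct_comm, perp_perp hu]

lemma neg_dotProduct_sub_mul_le {x : α → ℝ} (hx : 0 ≤ x) (t h : α → ℝ) (c : ℝ) :
    -(x ⬝ᵥ h) - c * (x ⬝ᵥ t) ≤ l2 x * l2 ((fun i => -c * t i - h i) ⊔ 0) := by
  refine le_trans (le_of_eq ?_) ((dotProduct_le_dotProduct_of_nonneg_left
    (le_sup_left : _ ≤ (fun i => -c * t i - h i) ⊔ 0) hx).trans (dotProduct_le_l2_mul_l2 _ _))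
  rw [← smul_eq_mul c, ← dotProduct_smul, ← dotProduct_neg, ← dotProduct_sub]
  congr 1
  ext i
  simp only [Pi.sub_apply, Pi.neg_apply, Pi.smul_apply, smul_eq_mul]
  ring

lemma stdG_Iic_mul_gaussianMatrix_exists_nonneg_le {u : β → ℝ} (hu : u ⬝ᵥ u = 1) (t : α → ℝ)
    {c δ E : ℝ} (hδ : δ ^ 2 * (1 + c ^ 2) ≤ E ^ 2) (hE : 0 ≤ E) :
    stdG (Iic 0) * gaussianMatrix α β
        {w | ∃ l : α → ℝ, 0 ≤ l ∧ (l ⬝ᵥ t) ^ 2 + l2 (perp u (l ᵥ* w)) ^ 2 < δ ^ 2 * l2 l ^ 2}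
      ≤ (gaussianPi β).prod (gaussianPi α)
        {q | l2 (perp u q.1) ≤ l2 ((fun i => -c * t i - q.2 i) ⊔ 0) + E} := by
  have key := stdG_Iic_mul_gaussianMatrix_le_of_separable
    (X := {x : α → ℝ // 0 ≤ x ∧ 0 < l2 x}) (Y := β → ℝ)
    (θ := fun _ y => perp u y) (l := fun x _ => x.1)
    (d := fun x y => l2 (perp u y) * (c * (x.1 ⬝ᵥ t) - E * l2 x.1))
    (fun _ => continuous_perp u) (fun _ => continuous_const) (fun _ => by fun_prop)
    fun x y y' => by rw [← l2_sq x.1, sq, sub_self, mul_zero]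
  refine le_trans ?_ (key.trans (measure_mono ?_))
  · gcongr with w
    rintro ⟨l, hl, hw⟩
    have hl2 : 0 < l2 l := (l2_nonneg l).lt_of_ne fun h0 => by
      rw [← h0] at hw
      nlinarith [sq_nonneg (l ⬝ᵥ t), sq_nonneg (l2 (perp u (l ᵥ* w)))]
    have hopen : IsOpen {x : {x : α → ℝ // 0 ≤ x ∧ 0 < l2 x} |
        (x.1 ⬝ᵥ t) ^ 2 + l2 (perp u (x.1 ᵥ* w)) ^ 2 < δ ^ 2 * l2 x.1 ^ 2} :=
      isOpen_lt (by fun_prop) (by fun_prop)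
    refine ⟨⟨l, hl, hl2⟩, mem_interior.2 ⟨_, fun x hx y => ?_, hopen, hw⟩⟩
    have hdual := add_mul_le_mul_of_sq_add_sq_le hδ hE (l2_nonneg x.1) (le_of_lt hx)
    have hbilin : x.1 ⬝ᵥ (w *ᵥ perp u y) ≤ l2 (perp u y) * l2 (perp u (x.1 ᵥ* w)) := by
      rw [Matrix.dotProduct_mulVec x.1 w, ← perp_dotProduct_perp hu, mul_comm]
      exact dotProduct_le_l2_mul_l2 _ _
    nlinarith [l2_nonneg (perp u y)]
  · rintro ⟨g, h⟩ ⟨⟨x, hx, hx2⟩, hy⟩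
    set v : α → ℝ := (fun i => -c * t i - h i) ⊔ 0
    have hhinge : -(x ⬝ᵥ h) - c * (x ⬝ᵥ t) ≤ l2 x * l2 v := neg_dotProduct_sub_mul_le hx t h c
    have hgordon := hy g
    have hself : perp u g ⬝ᵥ g = l2 (perp u g) ^ 2 := by
      rw [l2_sq, perp_dotProduct_perp hu, dotProduct_comm]
    rw [hself] at hgordon
    change l2 (perp u g) ≤ l2 v + E
    by_contra! hlt
    have hpos : 0 < l2 (perp u g) := by linarith [l2_nonneg v]
    have hfac : l2 (perp u g) * (l2 x * l2 (perp u g) + x ⬝ᵥ h + c * (x ⬝ᵥ t) - E * l2 x) ≤ 0 := by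
      linarith
    nlinarith [nonpos_of_mul_nonpos_right hfac hpos, mul_lt_mul_of_pos_left hlt hx2]

end Comparison

/-! ### Reduction of the margin to a decoupled Gaussian model -/

section Reduction

open scoped Matrix

lemma mul_prod_le_prod {α β γ : Type*} [MeasurableSpace α] [MeasurableSpace β]
    [MeasurableSpace γ] {μ : Measure α} {μ₁ : Measure β} {μ₂ : Measure γ} [SFinite μ₁] [SFinite μ₂]
    {s : ENNReal} {B : Set (α × β)} (hB : MeasurableSet B) {C : Set (α × γ)}
    (h : ∀ t, s * μ₁ {w | (t, w) ∈ B} ≤ μ₂ {q | (t, q) ∈ C}) :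
    s * (μ.prod μ₁) B ≤ (μ.prod μ₂) C := by
  rw [Measure.prod_apply hB, ← measure_toMeasurable C,
    Measure.prod_apply (measurableSet_toMeasurable _ _),
    ← lintegral_const_mul _ (measurable_measure_prodMk_left hB)]
  exact lintegral_mono fun t => (h t).trans (measure_mono fun _ hq => subset_toMeasurable _ _ hq)

/-- The law of `(t, g, h)` with independent coordinates, those of `t ∈ ℝⁿ` distributed as `m` and
those of `g ∈ ℝᴷ` and `h ∈ ℝⁿ` standard Gaussian: the model to which Gordon's inequality reduces
the margin. -/
def decoupledLaw (m : Measure ℝ) (n : ℕ) (K : Type*) [Fintype K] :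
    Measure ((Fin n → ℝ) × (K → ℝ) × (Fin n → ℝ)) :=
  (Measure.pi fun _ => m).prod ((gaussianPi K).prod (gaussianPi (Fin n)))

lemma isOpen_exists_forall_lt_dotProduct {α β : Type*} [Finite α] [Fintype β] (κ : ℝ) :
    IsOpen {X : α → β → ℝ | ∃ θ, l2 θ = 1 ∧ ∀ i, κ < θ ⬝ᵥ X i} := by
  simp only [ofPred_exists, ofPred_and, ofPred_forall]
  refine isOpen_iUnion fun θ => isOpen_const.inter (isOpen_iInter_of_finite fun i => ?_)
  exact isOpen_lt continuous_const (by unfold dotProduct; fun_prop)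

lemma isOpen_exists_nonneg_l2_vecMul_lt {α β : Type*} [Fintype α] [Fintype β] (a : ℝ) :
    IsOpen {X : α → β → ℝ | ∃ l, 0 ≤ l ∧ l2 (l ᵥ* X) ^ 2 < a * l2 l ^ 2} := by
  simp only [ofPred_exists, ofPred_and]
  refine isOpen_iUnion fun l => isOpen_const.inter (isOpen_lt ?_ continuous_const)
  have : Continuous fun X : α → β → ℝ => l ᵥ* X := by
    unfold Matrix.vecMul dotProduct
    fun_prop
  fun_prop

variable {K : Type*} [Fintype K] {n p : ℕ} {f : ℝ → ℝ} {θ : Fin p → ℝ} {r : ℝ}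
  {A : Matrix (Fin p) K ℝ} {u : K → ℝ} {S : Matrix (Fin p) (Fin p) ℝ} {ν : Measure (Fin p → ℝ)}

lemma dotProduct_spikedSample {α J : Type*} [Fintype J] (A : Matrix J K ℝ) (u : K → ℝ)
    (t : α → ℝ) (w : α → K → ℝ) (θ : J → ℝ) (i : α) :
    θ ⬝ᵥ spikedSample A u (t, w) i
      = (u ⬝ᵥ (θ ᵥ* A)) * t i + (w *ᵥ perp u (θ ᵥ* A)) i := by
  rw [spikedSample, Matrix.dotProduct_mulVec, dotProduct_add, dotProduct_smul,
    ← perp_dotProduct_comm, dotProduct_comm _ u, dotProduct_comm (perp u _), smul_eq_mul, mul_comm]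
  rfl

lemma vecMul_spikedSample {α J : Type*} [Fintype α] (A : Matrix J K ℝ) (u : K → ℝ)
    (t : α → ℝ) (w : α → K → ℝ) (l : α → ℝ) :
    l ᵥ* spikedSample A u (t, w) = A *ᵥ ((l ⬝ᵥ t) • u + perp u (l ᵥ* w)) := by
  let W : Matrix α K ℝ := w
  have hsample : spikedSample A u (t, w)
      = (Matrix.vecMulVec t u + W - Matrix.vecMulVec (W *ᵥ u) u) * Aᵀ := by
    ext i j
    simp only [spikedSample, perp, Matrix.mul_apply', Matrix.mulVec, dotProduct_comm u]
    rw [dotProduct_comm, add_sub]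
    rfl
  rw [hsample, ← Matrix.vecMul_vecMul, Matrix.vecMul_transpose, Matrix.vecMul_sub,
    Matrix.vecMul_add, Matrix.vecMul_vecMulVec, Matrix.vecMul_vecMulVec, Matrix.dotProduct_mulVec,
    perp, dotProduct_comm u, add_sub]

lemma l2_smul_add_perp_sq (hu : u ⬝ᵥ u = 1) (a : ℝ) (g : K → ℝ) :
    l2 (a • u + perp u g) ^ 2 = a ^ 2 + l2 (perp u g) ^ 2 := by
  rw [l2_sq, l2_sq]
  simp only [add_dotProduct, dotProduct_add, smul_dotProduct, dotProduct_smul, hu,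
    dotProduct_perp_self hu, dotProduct_comm _ u, smul_eq_mul]
  ring

lemma mul_dataLaw_preimage_le (hf : Measurable f) (hf01 : ∀ x, f x ∈ Icc (0 : ℝ) 1)
    (hA : IsSpikeFactor A S θ r u) [IsProbabilityMeasure ν] (hν : IsCGauss ν S)
    {E : Set (Fin n → Fin p → ℝ)} (hE : MeasurableSet E) {s : ENNReal}
    {D : Set ((Fin n → ℝ) × (K → ℝ) × (Fin n → ℝ))}
    (h : ∀ t, s * gaussianMatrix (Fin n) K {w | spikedSample A u (t, w) ∈ E}
      ≤ ((gaussianPi K).prod (gaussianPi (Fin n))) {q | (t, q) ∈ D}) :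
    s * dataLaw n p f θ ν ((fun q i => q.2 i • q.1 i) ⁻¹' E)
      ≤ decoupledLaw (signedLaw stdG fun t => f (r * t)) n K D := by
  have hmeas : Measurable (spikedSample (α := Fin n) A u) := by unfold spikedSample; fun_prop
  rw [dataLaw_preimage hf hf01 hA hν hE]
  exact mul_prod_le_prod (hmeas hE) h

lemma stdG_Iic_mul_dataLaw_le_margin_le (hf : Measurable f) (hf01 : ∀ x, f x ∈ Icc (0 : ℝ) 1)
    (hA : IsSpikeFactor A S θ r u) [IsProbabilityMeasure ν] (hν : IsCGauss ν S) {C : ℝ}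
    (hC : ∀ θ, l2 (θ ᵥ* A) ^ 2 ≤ C * l2 θ ^ 2) {κ : ℝ} (hκ : 0 < κ) :
    stdG (Iic 0) * dataLaw n p f θ ν {q | κ ≤ margin n p q.1 q.2}
      ≤ decoupledLaw (signedLaw stdG fun t => f (r * t)) n K
        {q | ∃ a s : ℝ, 0 ≤ s ∧ a ^ 2 + s ^ 2 ≤ C ∧
          l2 ((fun i => κ / 2 - a * q.1 i + s * q.2.2 i) ⊔ 0) ≤ s * l2 q.2.1} := by
  refine le_trans ?_ (mul_dataLaw_preimage_le hf hf01 hA hν (s := stdG (Iic 0))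
    (isOpen_exists_forall_lt_dotProduct (κ / 2)).measurableSet fun t =>
      le_trans ?_ (stdG_Iic_mul_gaussianMatrix_exists_lt_le t C (κ / 2)))
  · gcongr
    exact fun q hq => exists_forall_lt_of_lt_margin (by positivity) ((half_lt_self hκ).trans_le hq)
  · gcongr with w
    rintro ⟨θ, hθ, hlt⟩
    refine ⟨u ⬝ᵥ (θ ᵥ* A), perp u (θ ᵥ* A), ?_, fun i => ?_⟩
    · rw [l2_perp_sq hA.unit, add_sub_cancel]
      simpa [hθ] using hC θ
    · rw [← dotProduct_spikedSample]
      exact hlt i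

lemma stdG_Iic_mul_dataLaw_margin_lt_le [NeZero n] (hf : Measurable f)
    (hf01 : ∀ x, f x ∈ Icc (0 : ℝ) 1)
    (hA : IsSpikeFactor A S θ r u) [IsProbabilityMeasure ν] (hν : IsCGauss ν S) {c₀ : ℝ}
    (hc₀ : 0 < c₀) (hAc : ∀ w, c₀ * l2 w ^ 2 ≤ l2 (A *ᵥ w) ^ 2) {κ c E : ℝ} (hκ : 0 < κ)
    (hE : 0 ≤ E) (hκE : κ ^ 2 * n * (1 + c ^ 2) ≤ c₀ * E ^ 2) :
    stdG (Iic 0) * dataLaw n p f θ ν {q | margin n p q.1 q.2 < κ}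
      ≤ decoupledLaw (signedLaw stdG fun t => f (r * t)) n K
        {q | l2 (perp u q.2.1) ≤ l2 ((fun i => -c * q.1 i - q.2.2 i) ⊔ 0) + E} := by
  have hδ : √(κ ^ 2 * n / c₀) ^ 2 = κ ^ 2 * n / c₀ := sq_sqrt (by positivity)
  have hδE : √(κ ^ 2 * n / c₀) ^ 2 * (1 + c ^ 2) ≤ E ^ 2 := by
    rw [hδ, div_mul_eq_mul_div, div_le_iff₀' hc₀]
    exact hκE
  refine le_trans ?_ (mul_dataLaw_preimage_le hf hf01 hA hν (s := stdG (Iic 0))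
    (isOpen_exists_nonneg_l2_vecMul_lt (κ ^ 2 * n)).measurableSet fun t =>
      le_trans ?_ (stdG_Iic_mul_gaussianMatrix_exists_nonneg_le hA.unit t hδE hE))
  · gcongr
    intro q hq
    by_contra hdual
    refine (not_le_of_gt hq) (le_margin_of_forall_nonneg hκ fun l hl => ?_)
    by_contra! hlt
    exact hdual ⟨l, hl, hlt⟩
  · gcongr with w
    rintro ⟨l, hl, hlt⟩
    refine ⟨l, hl, ?_⟩
    rw [vecMul_spikedSample] at hlt
    rw [hδ, div_mul_eq_mul_div, lt_div_iff₀' hc₀, ← l2_smul_add_perp_sq hA.unit]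
    exact (hAc _).trans_lt hlt

end Reduction

/-! ### Convergence in probability and the law of large numbers -/

section WithHighProbability

variable {J : Type*} {Ω Ω' : J → Type*} [∀ j, MeasurableSpace (Ω j)] [∀ j, MeasurableSpace (Ω' j)]

/-- The filter of the events that hold with high probability: those whose complements have
probabilities tending to zero along `l`. The random variables `X j : Ω j → E`, which may live on
different probability spaces, converge in probability to `c` iff
`Tendsto (fun x : Σ j, Ω j => X x.1 x.2) (whp μ l) (𝓝 c)`. -/
def whp (μ : ∀ j, Measure (Ω j)) (l : Filter J) : Filter (Σ j, Ω j) where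
  sets := {A | Tendsto (fun j => μ j {ω | ⟨j, ω⟩ ∉ A}) l (𝓝 0)}
  univ_sets := by simpa using tendsto_const_nhds
  sets_of_superset hA hAB := tendsto_of_tendsto_of_tendsto_of_le_of_le tendsto_const_nhds hA
    (fun _ => zero_le) fun _ => measure_mono fun _ hω h => hω (hAB h)
  inter_sets {A B} hA hB := by
    have hAB := hA.add hB
    rw [add_zero] at hAB
    refine tendsto_of_tendsto_of_tendsto_of_le_of_le tendsto_const_nhds hAB
      (fun _ => zero_le) fun j => (measure_mono fun ω hω => ?_).trans (measure_union_le _ _)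
    exact not_and_or.1 hω

variable {μ : ∀ j, Measure (Ω j)} {μ' : ∀ j, Measure (Ω' j)} {l : Filter J}

lemma eventually_whp {P : (Σ j, Ω j) → Prop} :
    (∀ᶠ x in whp μ l, P x) ↔ Tendsto (fun j => μ j {ω | ¬P ⟨j, ω⟩}) l (𝓝 0) :=
  Iff.rfl

lemma tendsto_fst_whp : Tendsto Sigma.fst (whp μ l) l := by
  intro s hs
  refine tendsto_const_nhds.congr' ?_
  filter_upwards [hs] with j hj
  simp [hj]

lemma tendsto_map_whp {T : ∀ j, Ω j → Ω' j} (hT : ∀ j, MeasurePreserving (T j) (μ j) (μ' j)) :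
    Tendsto (fun x : Σ j, Ω j => (⟨x.1, T x.1 x.2⟩ : Σ j, Ω' j)) (whp μ l) (whp μ' l) := by
  intro A hA
  refine tendsto_of_tendsto_of_tendsto_of_le_of_le tendsto_const_nhds hA (fun _ => zero_le)
    fun j => ?_
  rw [← (hT j).map_eq]
  exact Measure.le_map_apply (hT j).measurable.aemeasurable {ω | ⟨j, ω⟩ ∉ A}

end WithHighProbability

section LawOfLargeNumbers

variable {J : Type*} {l : Filter J}

lemma pi_le_abs_sum_sub_le {ι X : Type*} [Fintype ι] [MeasurableSpace X] {μ : Measure X}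
    [IsProbabilityMeasure μ] {φ : ι → X → ℝ} (hφ : ∀ i, MemLp (φ i) 2 μ) {ε : ℝ} (hε : 0 < ε) :
    (Measure.pi fun _ : ι => μ) {x | ε ≤ |∑ i, φ i (x i) - ∑ i, ∫ y, φ i y ∂μ|}
      ≤ ENNReal.ofReal ((∑ i, ∫ y, φ i y ^ 2 ∂μ) / ε ^ 2) := by
  have hmem (i : ι) : MemLp (fun x : ι → X => φ i (x i)) 2 (Measure.pi fun _ : ι => μ) :=
    (hφ i).comp_measurePreserving (measurePreserving_eval (fun _ : ι => μ) i)
  have hmean : ∫ x, (∑ i, fun x : ι → X => φ i (x i)) x ∂(Measure.pi fun _ : ι => μ)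
      = ∑ i, ∫ y, φ i y ∂μ := by
    simp only [Finset.sum_apply]
    rw [integral_finsetSum _ fun i _ => (hmem i).integrable one_le_two]
    exact Finset.sum_congr rfl fun i _ => integral_comp_eval (μ := fun _ : ι => μ) (hφ i).1
  have hcheb := meas_ge_le_variance_div_sq
    (memLp_finsetSum' Finset.univ fun i _ => hmem i) hε
  rw [hmean, variance_sum_pi (μ := fun _ : ι => μ) hφ] at hcheb
  simp only [Finset.sum_apply] at hcheb
  refine hcheb.trans (ENNReal.ofReal_le_ofReal ?_)
  gcongr with i
  exact variance_le_expectation_sq (hφ i).1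

lemma tendsto_sum_whp_pi {ι : J → Type*} [∀ j, Fintype (ι j)] {X : J → Type*}
    [∀ j, MeasurableSpace (X j)] {μ : ∀ j, Measure (X j)} [∀ j, IsProbabilityMeasure (μ j)]
    {φ : ∀ j, ι j → X j → ℝ} (hφ : ∀ j i, MemLp (φ j i) 2 (μ j)) {c : ℝ}
    (hmean : Tendsto (fun j => ∑ i, ∫ y, φ j i y ∂μ j) l (𝓝 c))
    (hsq : Tendsto (fun j => ∑ i, ∫ y, φ j i y ^ 2 ∂μ j) l (𝓝 0)) :
    Tendsto (fun x : Σ j, ι j → X j => ∑ i, φ x.1 i (x.2 i))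
      (whp (fun j => Measure.pi fun _ : ι j => μ j) l) (𝓝 c) := by
  have hdev : Tendsto
      (fun x : Σ j, ι j → X j => ∑ i, φ x.1 i (x.2 i) - ∑ i, ∫ y, φ x.1 i y ∂μ x.1)
      (whp (fun j => Measure.pi fun _ : ι j => μ j) l) (𝓝 0) := by
    refine Metric.tendsto_nhds.2 fun ε hε => eventually_whp.2 ?_
    have hbound : Tendsto
        (fun j => ENNReal.ofReal ((∑ i, ∫ y, φ j i y ^ 2 ∂μ j) / ε ^ 2)) l (𝓝 0) := by
      simpa using ENNReal.tendsto_ofReal (hsq.div_const (ε ^ 2))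
    refine tendsto_of_tendsto_of_tendsto_of_le_of_le tendsto_const_nhds hbound
      (fun _ => zero_le) fun j => ?_
    simpa [dist_zero_right] using pi_le_abs_sum_sub_le (hφ j) hε
  simpa using hdev.add (hmean.comp tendsto_fst_whp)

end LawOfLargeNumbers

section Decoupled

variable {p : ℕ → ℕ} {m : ℕ → Measure ℝ} [∀ n, IsProbabilityMeasure (m n)]

lemma tendsto_average_whp_decoupledLaw {φ : ℝ × ℝ → ℝ}
    (hφ : ∀ n, MemLp φ 2 ((m n).prod stdG)) {c B : ℝ}
    (hmean : Tendsto (fun n => ∫ q, φ q ∂(m n).prod stdG) atTop (𝓝 c))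
    (hB : ∀ n, ∫ q, φ q ^ 2 ∂(m n).prod stdG ≤ B) :
    Tendsto (fun x : Σ n, (Fin n → ℝ) × (Fin (p n) → ℝ) × (Fin n → ℝ) =>
        (∑ i, φ (x.2.1 i, x.2.2.2 i)) / x.1)
      (whp (fun n => decoupledLaw (m n) n (Fin (p n))) atTop) (𝓝 c) := by
  have hiid : Tendsto (fun x : Σ n, Fin n → ℝ × ℝ => ∑ i, φ (x.2 i) / x.1)
      (whp (fun n => Measure.pi fun _ : Fin n => (m n).prod stdG) atTop) (𝓝 c) := by
    refine tendsto_sum_whp_pi (μ := fun n => (m n).prod stdG) (φ := fun n _ y => φ y / n)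
      (fun n _ => ?_) ?_ ?_
    · simpa only [div_eq_mul_inv] using (hφ n).mul_const (n : ℝ)⁻¹
    · refine hmean.congr' ?_
      filter_upwards [eventually_ne_atTop 0] with n hn
      simp [integral_div, field]
    · refine tendsto_of_tendsto_of_tendsto_of_le_of_le' tendsto_const_nhds
        (tendsto_const_div_atTop_nhds_zero_nat B)
        (.of_forall fun n => Finset.sum_nonneg fun _ _ => integral_nonneg fun _ => sq_nonneg _) ?_
      filter_upwards [eventually_gt_atTop 0] with n hn
      calc ∑ i : Fin n, ∫ y, (φ y / n) ^ 2 ∂(m n).prod stdG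
          = (∫ y, φ y ^ 2 ∂(m n).prod stdG) / n := by
            simp [div_pow, integral_div, field]
        _ ≤ B / n := by gcongr; exact hB n
  have hT (n : ℕ) := (measurePreserving_arrowProdEquivProdArrow ℝ ℝ (Fin n) (fun _ => m n)
    fun _ => stdG).symm.comp ((MeasurePreserving.id (Measure.pi fun _ : Fin n => m n)).prod
      (measurePreserving_snd (μ := gaussianPi (Fin (p n))) (ν := gaussianPi (Fin n))))
  refine (hiid.comp (tendsto_map_whp hT)).congr fun x => ?_
  rw [Finset.sum_div]
  rfl

lemma measurePreserving_fst_snd_decoupledLaw (m : Measure ℝ) [IsProbabilityMeasure m] (n : ℕ)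
    (K : Type*) [Fintype K] :
    MeasurePreserving (fun q => q.2.1) (decoupledLaw m n K) (gaussianPi K) :=
  (measurePreserving_fst (ν := gaussianPi (Fin n))).comp measurePreserving_snd

lemma memLp_sq {X : Type*} [MeasurableSpace X] {μ : Measure X} {g : X → ℝ}
    (hg : MemLp g 4 μ) : MemLp (fun x => g x ^ 2) 2 μ := by
  have hm := hg.1
  rw [memLp_two_iff_integrable_sq (by fun_prop)]
  refine (hg.integrable_norm_pow (p := 4) four_ne_zero).congr (ae_of_all _ fun x => ?_)
  simp [← pow_mul, (show Even 4 by decide).pow_abs]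

lemma integral_sq_stdG : ∫ x, x ^ 2 ∂stdG = 1 := by
  simpa [sq] using integral_mul_stdG (φ := fun x => x) .id'

lemma tendsto_l2_sq_div_whp_decoupledLaw {ψ : ℝ}
    (hp : Tendsto (fun n => (p n : ℝ) / n) atTop (𝓝 ψ)) :
    Tendsto (fun x : Σ n, (Fin n → ℝ) × (Fin (p n) → ℝ) × (Fin n → ℝ) => l2 x.2.2.1 ^ 2 / x.1)
      (whp (fun n => decoupledLaw (m n) n (Fin (p n))) atTop) (𝓝 ψ) := by
  have hiid : Tendsto (fun x : Σ n, Fin (p n) → ℝ => ∑ i, x.2 i ^ 2 / x.1)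
      (whp (fun n => gaussianPi (Fin (p n))) atTop) (𝓝 ψ) := by
    refine tendsto_sum_whp_pi (ι := fun n => Fin (p n)) (μ := fun _ => stdG)
      (φ := fun n _ y => y ^ 2 / n) (fun n _ => ?_) ?_ ?_
    · simpa only [div_eq_mul_inv, id] using
        (memLp_sq (IsGaussian.memLp_id stdG 4 (by simp))).mul_const (n : ℝ)⁻¹
    · simpa [integral_div, integral_sq_stdG, ← div_eq_mul_inv] using hp
    · have := (hp.mul_const (∫ y, (y ^ 2) ^ 2 ∂stdG)).mul
        (tendsto_const_div_atTop_nhds_zero_nat (1 : ℝ))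
      rw [mul_zero] at this
      refine this.congr fun n => ?_
      simp [div_pow, integral_div]
      ring
  have h := hiid.comp (tendsto_map_whp fun n =>
    measurePreserving_fst_snd_decoupledLaw (m n) n (Fin (p n)))
  refine h.congr fun x => ?_
  rw [l2_sq, dotProduct, Finset.sum_div]
  simp [sq]

lemma tendsto_dotProduct_sq_div_whp_decoupledLaw {u : ∀ n, Fin (p n) → ℝ}
    (hu : ∀ᶠ n in atTop, u n ⬝ᵥ u n = 1) :
    Tendsto (fun x : Σ n, (Fin n → ℝ) × (Fin (p n) → ℝ) × (Fin n → ℝ) =>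
        (u x.1 ⬝ᵥ x.2.2.1) ^ 2 / x.1)
      (whp (fun n => decoupledLaw (m n) n (Fin (p n))) atTop) (𝓝 0) := by
  have hiid : Tendsto (fun x : Σ n, Fin (p n) → ℝ => ∑ i, u x.1 i * x.2 i / √x.1)
      (whp (fun n => gaussianPi (Fin (p n))) atTop) (𝓝 0) := by
    refine tendsto_sum_whp_pi (μ := fun _ => stdG) (φ := fun n i y => u n i * y / √n)
      (fun n i => ?_) ?_ ?_
    · simpa only [div_eq_mul_inv, id] using
        ((IsGaussian.memLp_id stdG 2 (by simp)).const_mul (u n i)).mul_const (√n)⁻¹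
    · have hmean (a : ℝ) : ∫ y, a * y ∂stdG = 0 := by
        rw [integral_const_mul a fun y => y, stdG, integral_id_gaussianReal, mul_zero]
      simp [integral_div, hmean]
    · refine tendsto_one_div_atTop_nhds_zero_nat.congr' ?_
      filter_upwards [hu] with n hn
      have hn' : ∑ i, u n i ^ 2 = 1 := by simpa [dotProduct, ← sq] using hn
      simp [div_pow, mul_pow, integral_div, integral_const_mul, integral_sq_stdG,
        ← Finset.sum_div, hn']
  have h := (hiid.comp (tendsto_map_whp fun n =>
    measurePreserving_fst_snd_decoupledLaw (m n) n (Fin (p n)))).pow 2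
  rw [zero_pow two_ne_zero] at h
  refine h.congr fun x => ?_
  simp [dotProduct, ← Finset.sum_div, div_pow]

end Decoupled

/-! ### The limiting hinge functional -/

section SignedLawLimit

variable {E : Type*} [MeasurableSpace E] [Neg E] [MeasurableNeg E] {ν : Measure E}

lemma signedLaw_le_two_smul (hν : ν.map Neg.neg = ν) {q : E → ℝ}
    (hq01 : ∀ x, q x ∈ Icc (0 : ℝ) 1) : signedLaw ν q ≤ (2 : ENNReal) • ν :=
  (signedLaw_le hq01).trans_eq (by rw [hν, two_smul])

lemma signedLaw_apply_of_neg_preimage {q : E → ℝ} (hq : Measurable q)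
    (hq01 : ∀ x, q x ∈ Icc (0 : ℝ) 1) {s : Set E} (hs : MeasurableSet s)
    (hneg : Neg.neg ⁻¹' s = s) : signedLaw ν q s = ν s := by
  have hind (x : E) : s.indicator (1 : E → ENNReal) (-x) = s.indicator 1 x := by
    conv_rhs => rw [← hneg]
    rfl
  simp only [signedLaw_apply hq hs, hind, ← add_mul, ofReal_add_ofReal_one_sub (hq01 _), one_mul,
    lintegral_indicator_one hs]

lemma tendsto_integral_signedLaw {J : Type*} {l : Filter J} [l.IsCountablyGenerated]
    {q : J → E → ℝ} {q' : E → ℝ} (hq : ∀ j, Measurable (q j)) (hq' : Measurable q')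
    (hq01 : ∀ j x, q j x ∈ Icc (0 : ℝ) 1) (hq01' : ∀ x, q' x ∈ Icc (0 : ℝ) 1)
    (hlim : ∀ x, Tendsto (fun j => q j x) l (𝓝 (q' x))) {φ : E → ℝ} (hφ : Measurable φ)
    (hint : Integrable φ ν) (hint' : Integrable (fun x => φ (-x)) ν) :
    Tendsto (fun j => ∫ x, φ x ∂signedLaw ν (q j)) l (𝓝 (∫ x, φ x ∂signedLaw ν q')) := by
  simp only [integral_signedLaw (hq _) (hq01 _) hφ hint hint',
    integral_signedLaw hq' hq01' hφ hint hint']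
  refine tendsto_integral_filter_of_dominated_convergence (fun x => |φ x| + |φ (-x)|)
    (.of_forall fun j => ?_) (.of_forall fun j => ae_of_all _ fun x => ?_)
    (hint.abs.add hint'.abs)
    (ae_of_all _ fun x => ((hlim x).mul_const _).add (((hlim x).const_sub 1).mul_const _))
  · have := hq j
    fun_prop
  · obtain ⟨h0, h1⟩ := hq01 j x
    refine (norm_add_le _ _).trans (add_le_add ?_ ?_) <;> rw [norm_mul, norm_eq_abs, norm_eq_abs]
    · exact mul_le_of_le_one_left (abs_nonneg _) (abs_le.2 ⟨by linarith, h1⟩)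
    · exact mul_le_of_le_one_left (abs_nonneg _) (abs_le.2 ⟨by linarith, by linarith⟩)

end SignedLawLimit

section HingeFunctional

instance : stdG.IsOpenPosMeasure :=
  (gaussianReal_absolutelyContinuous' 0 one_ne_zero).isOpenPosMeasure

/-- The joint law of `(Y * G, Z)`, where `G` and `Z` are independent standard Gaussians and
`P(Y = 1 | G) = f G`. -/
abbrev hingeLaw (f : ℝ → ℝ) : Measure (ℝ × ℝ) := (signedLaw stdG f).prod stdG

/-- The hinge `(κ - a t - b z)₊`, whose second moment under `hingeLaw f` is `Fk f κ a b ^ 2`. -/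
def hinge (κ a b : ℝ) (q : ℝ × ℝ) : ℝ := max (κ - a * q.1 - b * q.2) 0

variable {f : ℝ → ℝ} {κ : ℝ}

lemma hingeLaw_eq_signedLaw (hf : Measurable f) :
    hingeLaw f = signedLaw (stdG.prod stdG) fun q => f q.1 :=
  (signedLaw_prod map_neg_stdG hf).symm

lemma map_neg_stdG_prod_stdG : (stdG.prod stdG).map Neg.neg = stdG.prod stdG := by
  conv_rhs => rw [← map_neg_stdG]
  rw [Measure.map_prod_map _ _ measurable_neg measurable_neg]
  rfl

lemma hingeLaw_le (hf : Measurable f) (hf01 : ∀ x, f x ∈ Icc (0 : ℝ) 1) :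
    hingeLaw f ≤ (2 : ENNReal) • stdG.prod stdG := by
  rw [hingeLaw_eq_signedLaw hf]
  exact signedLaw_le_two_smul map_neg_stdG_prod_stdG fun q => hf01 q.1

lemma memLp_hingeLaw (hf : Measurable f) (hf01 : ∀ x, f x ∈ Icc (0 : ℝ) 1) {φ : ℝ × ℝ → ℝ}
    {r : ENNReal} (hφ : MemLp φ r (stdG.prod stdG)) : MemLp φ r (hingeLaw f) :=
  hφ.of_measure_le_smul (by simp) (hingeLaw_le hf hf01)

@[fun_prop]
lemma continuous_hinge (κ a b : ℝ) : Continuous (hinge κ a b) := by unfold hinge; fun_prop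

lemma hinge_nonneg (κ a b : ℝ) (q : ℝ × ℝ) : 0 ≤ hinge κ a b q := le_max_right _ _

lemma hinge_mono (a b : ℝ) (q : ℝ × ℝ) : Monotone fun κ => hinge κ a b q :=
  fun κ κ' h => max_le_max_right 0 (by linarith)

lemma memLp_hinge (κ a b : ℝ) {r : ENNReal} (hr : r ≠ ⊤) :
    MemLp (hinge κ a b) r (stdG.prod stdG) := by
  have h := IsGaussian.memLp_id stdG r hr
  exact (((memLp_const κ).sub ((h.const_mul a).comp_fst stdG)).sub
    ((h.const_mul b).comp_snd stdG)).pos_part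

lemma Fk_nonneg (f : ℝ → ℝ) (κ a b : ℝ) : 0 ≤ Fk f κ a b := sqrt_nonneg _

lemma Fk_sq (hf : Measurable f) (hf01 : ∀ x, f x ∈ Icc (0 : ℝ) 1) (κ a b : ℝ) :
    Fk f κ a b ^ 2 = ∫ q, hinge κ a b q ^ 2 ∂hingeLaw f := by
  have hsq : Integrable (fun q => hinge κ a b q ^ 2) (stdG.prod stdG) :=
    (memLp_hinge κ a b (by simp)).integrable_sq
  have hneg : Integrable (fun q : ℝ × ℝ => hinge κ a b (-q.1, q.2) ^ 2) (stdG.prod stdG) := by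
    simpa [hinge] using (memLp_hinge κ (-a) b (by simp : (2 : ENNReal) ≠ ⊤)).integrable_sq
  have := isProbabilityMeasure_signedLaw (ν := stdG) hf hf01
  have hm : StronglyMeasurable fun t => ∫ z, hinge κ a b (t, z) ^ 2 ∂stdG :=
    (by fun_prop : Continuous fun q => hinge κ a b q ^ 2).stronglyMeasurable.integral_prod_right'
  rw [integral_prod _ (memLp_hingeLaw hf hf01 (memLp_hinge κ a b (by simp))).integrable_sq,
    integral_signedLaw hf hf01 hm.measurable hsq.integral_prod_left hneg.integral_prod_left, Fk,
    sq_sqrt]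
  · refine integral_congr_ae ?_
    filter_upwards [hsq.prod_right_ae, hneg.prod_right_ae] with t ht ht'
    rw [← integral_const_mul, ← integral_const_mul,
      ← integral_add (ht.const_mul _) (ht'.const_mul _)]
    simp only [hinge, mul_neg, sub_neg_eq_add]
  · refine integral_nonneg fun t => integral_nonneg fun z => ?_
    exact add_nonneg (mul_nonneg (hf01 t).1 (sq_nonneg _))
      (mul_nonneg (sub_nonneg.2 (hf01 t).2) (sq_nonneg _))

lemma Fk_lt_Fk (hf : Measurable f) (hf01 : ∀ x, f x ∈ Icc (0 : ℝ) 1) (hκ : 0 < κ) (a b : ℝ) :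
    Fk f 0 a b < Fk f κ a b := by
  refine lt_of_pow_lt_pow_left₀ 2 (Fk_nonneg ..) ?_
  have hint (κ : ℝ) : Integrable (fun q => hinge κ a b q ^ 2) (hingeLaw f) :=
    (memLp_hingeLaw hf hf01 (memLp_hinge κ a b (by simp))).integrable_sq
  have hnonneg : 0 ≤ fun q => hinge κ a b q ^ 2 - hinge 0 a b q ^ 2 := fun q =>
    sub_nonneg.2 (pow_le_pow_left₀ (hinge_nonneg 0 a b q) (hinge_mono a b q hκ.le) 2)
  rw [Fk_sq hf hf01, Fk_sq hf hf01, ← sub_pos, ← integral_sub (hint κ) (hint 0),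
    integral_pos_iff_support_of_nonneg hnonneg ((hint κ).sub (hint 0))]
  set U : Set (ℝ × ℝ) := {q | |a * q.1 + b * q.2| < κ} with hU
  have hUo : IsOpen U := isOpen_lt (by fun_prop) continuous_const
  have hUneg : Neg.neg ⁻¹' U = U := by
    ext q
    simp only [hU, mem_preimage, mem_ofPred_eq, Prod.fst_neg, Prod.snd_neg, mul_neg, ← neg_add,
      abs_neg]
  have hUsupp : U ⊆ Function.support fun q => hinge κ a b q ^ 2 - hinge 0 a b q ^ 2 := by
    intro q (hq : |a * q.1 + b * q.2| < κ)
    have hq' := (abs_lt.1 hq).2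
    have : hinge 0 a b q < hinge κ a b q :=
      max_lt (lt_max_of_lt_left (by linarith)) (lt_max_of_lt_left (by linarith))
    exact (sub_pos.2 (pow_lt_pow_left₀ this (hinge_nonneg 0 a b q) two_ne_zero)).ne'
  calc 0 < stdG.prod stdG U := hUo.measure_pos _ ⟨0, by simpa [hU] using hκ⟩
    _ = hingeLaw f U := by
      rw [hingeLaw_eq_signedLaw hf, signedLaw_apply_of_neg_preimage (by fun_prop)
        (fun q => hf01 q.1) hUo.measurableSet hUneg]
    _ ≤ _ := measure_mono hUsupp

lemma integral_comp_neg_stdG (φ : ℝ → ℝ) : ∫ z, φ (-z) ∂stdG = ∫ z, φ z ∂stdG := by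
  conv_rhs => rw [← map_neg_stdG]
  exact (integral_map_equiv (MeasurableEquiv.neg ℝ) φ).symm

lemma Fk_neg (f : ℝ → ℝ) (κ a b : ℝ) : Fk f κ a (-b) = Fk f κ a b := by
  unfold Fk
  congr 2 with g
  rw [← integral_comp_neg_stdG]
  simp only [neg_mul_neg]

lemma Fk_mul (f : ℝ → ℝ) (a : ℝ) {s : ℝ} (hs : 0 ≤ s) : Fk f 0 (s * a) s = s * Fk f 0 a 1 := by
  have hmax (x y : ℝ) : max (0 + s * x - s * y) 0 = s * max (0 + x - 1 * y) 0 := by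
    rw [mul_max_of_nonneg _ _ hs]
    ring_nf
  have hmax' (x y : ℝ) : max (0 - s * x - s * y) 0 = s * max (0 - x - 1 * y) 0 := by
    simpa using hmax (-x) y
  have hsq (u v x y : ℝ) : u * (s * x) ^ 2 + v * (s * y) ^ 2 = s ^ 2 * (u * x ^ 2 + v * y ^ 2) := by
    ring
  simp only [Fk, mul_assoc, hmax, hmax', hsq, integral_const_mul]
  rw [sqrt_mul (sq_nonneg s), sqrt_sq hs]

lemma mul_sqrt_lt_Fk (hf : Measurable f) (hf01 : ∀ x, f x ∈ Icc (0 : ℝ) 1) {ψ : ℝ}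
    (hψ : ∀ a, ψ ≤ Fk f 0 a 1 ^ 2) (hκ : 0 < κ) (a : ℝ) {s : ℝ} (hs : 0 ≤ s) :
    s * √ψ < Fk f κ a s := by
  refine lt_of_le_of_lt ?_ (Fk_lt_Fk hf hf01 hκ a s)
  rcases hs.eq_or_lt with rfl | hs'
  · rw [zero_mul]
    exact Fk_nonneg ..
  · calc s * √ψ ≤ s * Fk f 0 (a / s) 1 := by
          gcongr
          exact sqrt_le_iff.2 ⟨Fk_nonneg .., hψ _⟩
      _ = Fk f 0 a s := by rw [← Fk_mul f _ hs, mul_div_cancel₀ a hs'.ne']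

end HingeFunctional

/-! ### Asymptotics of the decoupled model -/

section EuclideanNorm

variable {α : Type*} [Fintype α]

lemma l2_add_le (v w : α → ℝ) : l2 (v + w) ≤ l2 v + l2 w := by
  simpa only [l2_eq_norm, WithLp.toLp_add] using norm_add_le _ _

lemma l2_smul (a : ℝ) (v : α → ℝ) : l2 (a • v) = |a| * l2 v := by
  rw [l2_eq_norm, l2_eq_norm, WithLp.toLp_smul, norm_smul, norm_eq_abs]

lemma l2_le_l2 {v w : α → ℝ} (h : ∀ i, |v i| ≤ |w i|) : l2 v ≤ l2 w :=
  sqrt_le_sqrt (Finset.sum_le_sum fun i _ => sq_le_sq.2 (h i))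

lemma l2_sup_zero_le_add (v w : α → ℝ) : l2 (v ⊔ 0) ≤ l2 (w ⊔ 0) + l2 (v - w) :=
  calc l2 (v ⊔ 0) = l2 (w ⊔ 0 + (v ⊔ 0 - w ⊔ 0)) := by rw [add_sub_cancel]
    _ ≤ l2 (w ⊔ 0) + l2 (v ⊔ 0 - w ⊔ 0) := l2_add_le _ _
    _ ≤ l2 (w ⊔ 0) + l2 (v - w) := by
      gcongr
      exact l2_le_l2 fun i => abs_max_sub_max_le_abs _ _ _

lemma l2_hinge (κ a b : ℝ) (t h : α → ℝ) :
    l2 (fun i => hinge κ a b (t i, h i)) = l2 ((fun i => κ - a * t i - b * h i) ⊔ 0) :=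
  congrArg l2 (funext fun _ => rfl)

lemma l2_hinge_le_add (κ a a' b b' : ℝ) (t h : α → ℝ) :
    l2 (fun i => hinge κ a b (t i, h i))
      ≤ l2 (fun i => hinge κ a' b' (t i, h i)) + (|a - a'| * l2 t + |b - b'| * l2 h) := by
  refine (l2_sup_zero_le_add (fun i => κ - a * t i - b * h i)
    (fun i => κ - a' * t i - b' * h i)).trans (add_le_add_right ?_ _)
  rw [abs_sub_comm a, abs_sub_comm b, ← l2_smul, ← l2_smul]
  refine (congrArg l2 ?_).trans_le (l2_add_le _ _)
  ext i
  simp only [Pi.sub_apply, Pi.add_apply, Pi.smul_apply, smul_eq_mul]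
  ring

lemma l2_div_sqrt (v : α → ℝ) (x : ℝ) : l2 v / √x = √(l2 v ^ 2 / x) := by
  rw [sqrt_div (sq_nonneg _), sqrt_sq (l2_nonneg v)]

end EuclideanNorm

/-- The high-probability filter of the decoupled models with `n` observations, `p n` features and
signal strength `r n`. -/
abbrev decoupledWhp (f : ℝ → ℝ) (r : ℕ → ℝ) (p : ℕ → ℕ) :
    Filter (Σ n, (Fin n → ℝ) × (Fin (p n) → ℝ) × (Fin n → ℝ)) :=
  whp (fun n => decoupledLaw (signedLaw stdG fun t => f (r n * t)) n (Fin (p n))) atTop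

section Asymptotics

variable {f : ℝ → ℝ} {r : ℕ → ℝ} {p : ℕ → ℕ} {ρ ψ κ : ℝ}

lemma tendsto_average_decoupledWhp (hf : Continuous f) (hf01 : ∀ x, f x ∈ Icc (0 : ℝ) 1)
    (hr : Tendsto r atTop (𝓝 ρ)) {φ : ℝ × ℝ → ℝ} (hφ : Measurable φ)
    (hφ2 : MemLp φ 2 (stdG.prod stdG)) :
    Tendsto (fun x => (∑ i, φ (x.2.1 i, x.2.2.2 i)) / x.1) (decoupledWhp f r p)
      (𝓝 (∫ q, φ q ∂hingeLaw fun t => f (ρ * t))) := by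
  have hprob (n : ℕ) : IsProbabilityMeasure (signedLaw stdG fun t => f (r n * t)) :=
    isProbabilityMeasure_signedLaw (by fun_prop) fun t => hf01 _
  have hint := hφ2.integrable one_le_two
  have hneg : MeasurePreserving Neg.neg (stdG.prod stdG) (stdG.prod stdG) :=
    ⟨measurable_neg, map_neg_stdG_prod_stdG⟩
  refine tendsto_average_whp_decoupledLaw (B := 2 * ∫ q, φ q ^ 2 ∂stdG.prod stdG)
    (fun n => memLp_hingeLaw (by fun_prop) (fun t => hf01 _) hφ2) ?_ fun n => ?_
  · have hlim := tendsto_integral_signedLaw (l := atTop) (q := fun n x => f (r n * x.1))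
      (q' := fun x : ℝ × ℝ => f (ρ * x.1)) (fun n => by fun_prop) (by fun_prop)
      (fun n x => hf01 _) (fun x => hf01 _)
      (fun x => (hf.tendsto _).comp (hr.mul_const _)) hφ hint
      (hneg.integrable_comp_of_integrable hint)
    rw [hingeLaw_eq_signedLaw (by fun_prop)]
    refine hlim.congr fun n => ?_
    rw [← hingeLaw_eq_signedLaw (f := fun t => f (r n * t)) (by fun_prop)]
  · refine (integral_mono_measure (hingeLaw_le (f := fun t => f (r n * t)) (by fun_prop)
      fun t => hf01 _) (ae_of_all _ fun q => sq_nonneg (φ q))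
      (hφ2.integrable_sq.smul_measure (by simp))).trans_eq ?_
    simp [integral_smul_measure]

lemma tendsto_l2_div_sqrt_decoupledWhp (hf : Continuous f) (hf01 : ∀ x, f x ∈ Icc (0 : ℝ) 1)
    (hr : Tendsto r atTop (𝓝 ρ)) {φ : ℝ × ℝ → ℝ} (hφ : Measurable φ)
    (hφ4 : MemLp φ 4 (stdG.prod stdG)) :
    Tendsto (fun x => l2 (fun i => φ (x.2.1 i, x.2.2.2 i)) / √x.1) (decoupledWhp f r p)
      (𝓝 √(∫ q, φ q ^ 2 ∂hingeLaw fun t => f (ρ * t))) := by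
  refine ((tendsto_average_decoupledWhp hf hf01 hr (hφ.pow_const 2)
    (memLp_sq hφ4)).sqrt).congr fun x => ?_
  rw [l2_div_sqrt, l2_sq]
  simp only [dotProduct, ← sq]

lemma tendsto_l2_hinge_div_sqrt (hf : Continuous f) (hf01 : ∀ x, f x ∈ Icc (0 : ℝ) 1)
    (hr : Tendsto r atTop (𝓝 ρ)) (κ a b : ℝ) :
    Tendsto (fun x => l2 (fun i => hinge κ a b (x.2.1 i, x.2.2.2 i)) / √x.1)
      (decoupledWhp f r p) (𝓝 (Fk (fun t => f (ρ * t)) κ a b)) := by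
  have h := tendsto_l2_div_sqrt_decoupledWhp (p := p) hf hf01 hr
    (continuous_hinge κ a b).measurable (memLp_hinge κ a b (by simp))
  rwa [← Fk_sq (by fun_prop) (fun t => hf01 _), sqrt_sq (Fk_nonneg ..)] at h

lemma exists_eventually_l2_hinge_add_lt_l2_perp (hf : Continuous f)
    (hf01 : ∀ x, f x ∈ Icc (0 : ℝ) 1) (hr : Tendsto r atTop (𝓝 ρ))
    (hp : Tendsto (fun n => (p n : ℝ) / n) atTop (𝓝 ψ)) {u : ∀ n, Fin (p n) → ℝ}
    (hu : ∀ᶠ n in atTop, u n ⬝ᵥ u n = 1) {c : ℝ} (hc : Fk (fun t => f (ρ * t)) 0 c 1 ^ 2 < ψ) :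
    ∃ ε > 0, ∀ᶠ x in decoupledWhp f r p,
      l2 ((fun i => -c * x.2.1 i - x.2.2.2 i) ⊔ 0) + ε * √x.1 < l2 (perp (u x.1) x.2.2.1) := by
  have hprob (n : ℕ) : IsProbabilityMeasure (signedLaw stdG fun t => f (r n * t)) :=
    isProbabilityMeasure_signedLaw (by fun_prop) fun t => hf01 _
  obtain ⟨ε, hε, hgap⟩ : ∃ ε > 0, Fk (fun t => f (ρ * t)) 0 c 1 + ε < √ψ := by
    have := lt_sqrt_of_sq_lt hc
    exact ⟨(√ψ - Fk (fun t => f (ρ * t)) 0 c 1) / 2, by linarith, by linarith⟩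
  have hperp : Tendsto (fun x => l2 (perp (u x.1) x.2.2.1) / √x.1) (decoupledWhp f r p)
      (𝓝 √ψ) := by
    have h := ((tendsto_l2_sq_div_whp_decoupledLaw
      (m := fun n => signedLaw stdG fun t => f (r n * t)) hp).sub
      (tendsto_dotProduct_sq_div_whp_decoupledLaw hu)).sqrt
    rw [sub_zero] at h
    refine h.congr' ?_
    filter_upwards [tendsto_fst_whp.eventually hu] with x hx
    rw [l2_div_sqrt, l2_perp_sq hx, sub_div]
  refine ⟨ε, hε, ?_⟩
  filter_upwards [((tendsto_l2_hinge_div_sqrt hf hf01 hr 0 c 1).add_const ε).eventually_lt hperp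
    hgap, tendsto_fst_whp.eventually (eventually_gt_atTop 0)] with x hx hn
  have hn' : 0 < √(x.1 : ℝ) := sqrt_pos.2 (Nat.cast_pos.2 hn)
  rw [lt_div_iff₀ hn', add_mul, div_mul_cancel₀ _ hn'.ne'] at hx
  simpa only [l2_hinge, zero_sub, one_mul, neg_mul] using hx

lemma eventually_nhds_mul_l2_lt_l2_hinge (hf : Continuous f) (hf01 : ∀ x, f x ∈ Icc (0 : ℝ) 1)
    (hr : Tendsto r atTop (𝓝 ρ)) (hp : Tendsto (fun n => (p n : ℝ) / n) atTop (𝓝 ψ)) {y : ℝ × ℝ}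
    (hy : y.2 * √ψ < Fk (fun t => f (ρ * t)) κ y.1 y.2) :
    ∀ᶠ z in decoupledWhp f r p ×ˢ 𝓝 y, z.2.2 * l2 z.1.2.2.1
      < l2 (fun i => hinge κ z.2.1 (-z.2.2) (z.1.2.1 i, z.1.2.2.2 i)) := by
  have hprob (n : ℕ) : IsProbabilityMeasure (signedLaw stdG fun t => f (r n * t)) :=
    isProbabilityMeasure_signedLaw (by fun_prop) fun t => hf01 _
  have hx := tendsto_fst (f := decoupledWhp f r p) (g := 𝓝 y)
  have hy' := tendsto_snd (f := decoupledWhp f r p) (g := 𝓝 y)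
  have hT := (tendsto_l2_div_sqrt_decoupledWhp hf hf01 hr measurable_fst
    ((IsGaussian.memLp_id stdG 4 (by simp)).comp_fst stdG)).comp hx
  have hH := (tendsto_l2_div_sqrt_decoupledWhp hf hf01 hr measurable_snd
    ((IsGaussian.memLp_id stdG 4 (by simp)).comp_snd stdG)).comp hx
  have hF := (tendsto_l2_hinge_div_sqrt hf hf01 hr κ y.1 (-y.2)).comp hx
  have hG := (tendsto_l2_sq_div_whp_decoupledLaw
    (m := fun n => signedLaw stdG fun t => f (r n * t)) hp).sqrt.comp hx
  have hscale := (continuous_snd.tendsto y).comp hy'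
  have hdev₁ := (by fun_prop : Continuous fun y' : ℝ × ℝ => |y.1 - y'.1|).tendsto y |>.comp hy'
  have hdev₂ := (by fun_prop : Continuous fun y' : ℝ × ℝ => |-y.2 - -y'.2|).tendsto y |>.comp hy'
  have hgap := (hscale.mul hG).eventually_lt (hF.sub ((hdev₁.mul hT).add (hdev₂.mul hH)))
    (by simpa [Fk_neg] using hy)
  filter_upwards [hgap] with z hz
  have hinv : 0 ≤ (√(z.1.1 : ℝ))⁻¹ := by positivity
  simp only [Function.comp_apply, ← l2_div_sqrt] at hz
  simp only [div_eq_mul_inv] at hz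
  refine lt_of_mul_lt_mul_right ?_ hinv
  have := mul_le_mul_of_nonneg_right
    (l2_hinge_le_add κ y.1 z.2.1 (-y.2) (-z.2.2) z.1.2.1 z.1.2.2.2) hinv
  linarith

lemma isCompact_half_disc (C : ℝ) : IsCompact {y : ℝ × ℝ | 0 ≤ y.2 ∧ y.1 ^ 2 + y.2 ^ 2 ≤ C} := by
  refine Metric.isCompact_of_isClosed_isBounded
    ((isClosed_le continuous_const continuous_snd).inter
      (isClosed_le ((continuous_fst.pow 2).add (continuous_snd.pow 2)) continuous_const))
    ((Metric.isBounded_Icc ((-√C, -√C) : ℝ × ℝ) (√C, √C)).subset fun y hy => ?_)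
  obtain ⟨h1, h1'⟩ := abs_le.1 (abs_le_sqrt (by linarith [hy.2, sq_nonneg y.2] : y.1 ^ 2 ≤ C))
  obtain ⟨h2, h2'⟩ := abs_le.1 (abs_le_sqrt (by linarith [hy.2, sq_nonneg y.1] : y.2 ^ 2 ≤ C))
  exact ⟨⟨h1, h2⟩, h1', h2'⟩

lemma eventually_forall_mul_l2_lt_l2_hinge (hf : Continuous f) (hf01 : ∀ x, f x ∈ Icc (0 : ℝ) 1)
    (hr : Tendsto r atTop (𝓝 ρ)) (hp : Tendsto (fun n => (p n : ℝ) / n) atTop (𝓝 ψ))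
    (hψ : ∀ a, ψ ≤ Fk (fun t => f (ρ * t)) 0 a 1 ^ 2) (hκ : 0 < κ) (C : ℝ) :
    ∀ᶠ x in decoupledWhp f r p, ∀ a s : ℝ, 0 ≤ s → a ^ 2 + s ^ 2 ≤ C →
      s * l2 x.2.2.1 < l2 ((fun i => κ - a * x.2.1 i + s * x.2.2.2 i) ⊔ 0) := by
  have hunif : ∀ᶠ z in decoupledWhp f r p ×ˢ
      𝓝ˢ {y : ℝ × ℝ | 0 ≤ y.2 ∧ y.1 ^ 2 + y.2 ^ 2 ≤ C}, z.2.2 * l2 z.1.2.2.1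
      < l2 (fun i => hinge κ z.2.1 (-z.2.2) (z.1.2.1 i, z.1.2.2.2 i)) :=
    (isCompact_half_disc C).mem_prod_nhdsSet_of_forall fun y hy =>
      eventually_nhds_mul_l2_lt_l2_hinge hf hf01 hr hp
        (mul_sqrt_lt_Fk (by fun_prop) (fun t => hf01 _) hψ hκ y.1 hy.1)
  filter_upwards [hunif.curry] with x hx a s hs hC
  have := hx.self_of_nhdsSet (a, s) ⟨hs, hC⟩
  simpa only [l2_hinge, neg_mul, sub_neg_eq_add] using this

end Asymptotics

/-! ### The margin of the data -/

section SquareRoot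

open scoped Matrix MatrixOrder

variable {J : Type*} [Fintype J] {S : Matrix J J ℝ}

lemma sum_sum_mul_mul_eq_dotProduct (S : Matrix J J ℝ) (a b : J → ℝ) :
    ∑ i, ∑ j, a i * S i j * b j = a ⬝ᵥ (S *ᵥ b) := by
  simp only [dotProduct, Matrix.mulVec, Finset.mul_sum, mul_assoc]

lemma exists_isSymm_mul_self_eq (hS : S.PosSemidef) : ∃ A : Matrix J J ℝ, A.IsSymm ∧ A * A = S := by
  classical
  exact ⟨CFC.sqrt S, (Matrix.nonneg_iff_posSemidef.1 (CFC.sqrt_nonneg S)).1,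
    CFC.sqrt_mul_sqrt_self S hS.nonneg⟩

lemma exists_isSpikeFactor (hS : S.PosSemidef) {θ : J → ℝ} (hθ : 0 < √(θ ⬝ᵥ (S *ᵥ θ))) :
    ∃ A u, IsSpikeFactor A S θ (√(θ ⬝ᵥ (S *ᵥ θ))) u ∧
      (∀ w, l2 (A *ᵥ w) ^ 2 = w ⬝ᵥ (S *ᵥ w)) ∧ ∀ w, l2 (w ᵥ* A) ^ 2 = w ⬝ᵥ (S *ᵥ w) := by
  obtain ⟨A, hA, rfl⟩ := exists_isSymm_mul_self_eq hS
  have hmul (w : J → ℝ) : A *ᵥ w = w ᵥ* A := by rw [← Matrix.vecMul_transpose, hA.eq]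
  have hsq (w : J → ℝ) : l2 (w ᵥ* A) ^ 2 = w ⬝ᵥ ((A * A) *ᵥ w) := by
    rw [l2_sq, ← Matrix.mulVec_mulVec, Matrix.dotProduct_mulVec w, hmul]
  rw [← hsq, sqrt_sq (l2_nonneg _)] at hθ ⊢
  refine ⟨A, (l2 (θ ᵥ* A))⁻¹ • (θ ᵥ* A), ⟨by rw [hA.eq], ?_, ?_⟩, fun w => ?_, hsq⟩
  · rw [smul_dotProduct, dotProduct_smul, ← l2_sq, smul_eq_mul, smul_eq_mul]
    field_simp
  · rw [smul_inv_smul₀ hθ.ne']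
  · rw [hmul, hsq]

end SquareRoot

lemma stdG_Iic_zero_ne_zero : stdG (Iic 0) ≠ 0 :=
  ((isOpen_Iio.measure_pos stdG nonempty_Iio).trans_le (measure_mono Iio_subset_Iic_self)).ne'

lemma tendsto_zero_of_mul_le {J : Type*} {l : Filter J} {a : ENNReal} (ha : a ≠ 0)
    (ha_top : a ≠ ⊤) {u v : J → ENNReal} (hv : Tendsto v l (𝓝 0))
    (huv : ∀ᶠ j in l, a * u j ≤ v j) : Tendsto u l (𝓝 0) := by
  have hva : Tendsto (fun j => v j / a) l (𝓝 0) := by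
    simpa using ENNReal.Tendsto.div_const hv (.inr ha)
  refine tendsto_of_tendsto_of_tendsto_of_le_of_le' tendsto_const_nhds hva
    (.of_forall fun _ => zero_le) ?_
  filter_upwards [huv] with j hj
  exact (ENNReal.le_div_iff_mul_le (.inl ha) (.inl ha_top)).2 (by rwa [mul_comm])

lemma tendsto_measure_one_of_tendsto_compl {J : Type*} {l : Filter J} {Ω : J → Type*}
    [∀ j, MeasurableSpace (Ω j)] {μ : ∀ j, Measure (Ω j)} [∀ j, IsProbabilityMeasure (μ j)]
    {s : ∀ j, Set (Ω j)} (h : Tendsto (fun j => μ j (s j)ᶜ) l (𝓝 0)) :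
    Tendsto (fun j => μ j (s j)) l (𝓝 1) := by
  have hsub : Tendsto (fun j => 1 - μ j (s j)ᶜ) l (𝓝 1) := by
    simpa using ENNReal.Tendsto.sub (tendsto_const_nhds (x := 1)) h (.inl ENNReal.one_ne_top)
  refine tendsto_of_tendsto_of_tendsto_of_le_of_le hsub tendsto_const_nhds (fun j => ?_)
    fun j => prob_le_one
  exact tsub_le_iff_right.2 ((measure_univ (μ := μ j)).symm.trans_le (measure_univ_le_add_compl _))

lemma isProbabilityMeasure_dataLaw {n p : ℕ} {f : ℝ → ℝ} (hf : Measurable f)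
    (hf01 : ∀ x, f x ∈ Icc (0 : ℝ) 1) (θ : Fin p → ℝ) (ν : Measure (Fin p → ℝ))
    [IsProbabilityMeasure ν] : IsProbabilityMeasure (dataLaw n p f θ ν) := by
  have := isProbabilityMeasure_signedLaw (ν := ν) (q := fun x => f (θ ⬝ᵥ x)) (by fun_prop)
    fun x => hf01 _
  have : IsProbabilityMeasure ((dataLaw n p f θ ν).map fun q i => q.2 i • q.1 i) := by
    rw [map_smul_dataLaw hf hf01]
    infer_instance
  exact Measure.isProbabilityMeasure_of_map
    fun (q : (Fin n → Fin p → ℝ) × (Fin n → ℝ)) i => q.2 i • q.1 i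

section Margin

variable {f : ℝ → ℝ} {r : ℕ → ℝ} {p : ℕ → ℕ} {ρ ψ : ℝ}
  {S A : ∀ n, Matrix (Fin (p n)) (Fin (p n)) ℝ} {θ u : ∀ n, Fin (p n) → ℝ}
  {ν : ∀ n, Measure (Fin (p n) → ℝ)} [∀ n, IsProbabilityMeasure (ν n)]

open scoped Matrix

theorem exists_tendsto_le_margin_one (hf : Continuous f) (hf01 : ∀ x, f x ∈ Icc (0 : ℝ) 1)
    (hr : Tendsto r atTop (𝓝 ρ)) (hp : Tendsto (fun n => (p n : ℝ) / n) atTop (𝓝 ψ))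
    (hA : ∀ n, IsSpikeFactor (A n) (S n) (θ n) (r n) (u n)) (hν : ∀ n, IsCGauss (ν n) (S n))
    {c₀ : ℝ} (hc₀ : 0 < c₀) (hAc : ∀ n w, c₀ * l2 w ^ 2 ≤ l2 (A n *ᵥ w) ^ 2)
    (hψ : psiStar0 (fun x => f (ρ * x)) < ψ) :
    ∃ κ > 0, Tendsto (fun n => dataLaw n (p n) f (θ n) (ν n) {q | κ ≤ margin n (p n) q.1 q.2})
      atTop (𝓝 1) := by
  obtain ⟨c, hc⟩ := exists_lt_of_ciInf_lt hψ
  obtain ⟨ε, hε, hev⟩ := exists_eventually_l2_hinge_add_lt_l2_perp hf hf01 hr hp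
    (.of_forall fun n => (hA n).unit) hc
  have hκ : 0 < √(c₀ / (1 + c ^ 2)) * ε := by positivity
  have hκE (n : ℕ) : (√(c₀ / (1 + c ^ 2)) * ε) ^ 2 * n * (1 + c ^ 2) ≤ c₀ * (ε * √n) ^ 2 := by
    rw [mul_pow, mul_pow, sq_sqrt (by positivity), sq_sqrt n.cast_nonneg]
    field_simp
    exact le_rfl
  have hprob (n : ℕ) : IsProbabilityMeasure (dataLaw n (p n) f (θ n) (ν n)) :=
    isProbabilityMeasure_dataLaw hf.measurable hf01 _ _
  refine ⟨_, hκ, tendsto_measure_one_of_tendsto_compl ?_⟩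
  refine tendsto_zero_of_mul_le stdG_Iic_zero_ne_zero (measure_ne_top _ _) (eventually_whp.1 hev) ?_
  filter_upwards [eventually_ne_atTop 0] with n hn
  have : NeZero n := ⟨hn⟩
  simpa only [compl_ofPred, not_le, not_lt] using stdG_Iic_mul_dataLaw_margin_lt_le hf.measurable
    hf01 (hA n) (hν n) hc₀ (hAc n) hκ (by positivity) (hκE n)

theorem tendsto_le_margin_zero (hf : Continuous f) (hf01 : ∀ x, f x ∈ Icc (0 : ℝ) 1)
    (hr : Tendsto r atTop (𝓝 ρ)) (hp : Tendsto (fun n => (p n : ℝ) / n) atTop (𝓝 ψ))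
    (hA : ∀ n, IsSpikeFactor (A n) (S n) (θ n) (r n) (u n)) (hν : ∀ n, IsCGauss (ν n) (S n))
    {C : ℝ} (hC : ∀ n w, l2 (w ᵥ* A n) ^ 2 ≤ C * l2 w ^ 2)
    (hψ : ψ ≤ psiStar0 (fun x => f (ρ * x))) {κ : ℝ} (hκ : 0 < κ) :
    Tendsto (fun n => dataLaw n (p n) f (θ n) (ν n) {q | κ ≤ margin n (p n) q.1 q.2})
      atTop (𝓝 0) := by
  have hbdd : BddBelow (range fun c => Fk (fun t => f (ρ * t)) 0 c 1 ^ 2) :=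
    ⟨0, forall_mem_range.2 fun _ => sq_nonneg _⟩
  have hev := eventually_forall_mul_l2_lt_l2_hinge hf hf01 hr hp
    (fun c => hψ.trans (ciInf_le hbdd c)) (half_pos hκ) C
  refine tendsto_zero_of_mul_le stdG_Iic_zero_ne_zero (measure_ne_top _ _) (eventually_whp.1 hev)
    (.of_forall fun n => ?_)
  simpa only [not_forall, not_lt, exists_prop] using
    stdG_Iic_mul_dataLaw_le_margin_le hf.measurable hf01 (hA n) (hν n) (hC n) hκ

end Margin

theorem statement_13_general
    (f : ℝ → ℝ) (hf : Continuous f) (hf01 : ∀ x, f x ∈ Icc (0 : ℝ) 1) (ψ : ℝ)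
    (p : ℕ → ℕ) (hp : Tendsto (fun n => (p n : ℝ) / n) atTop (𝓝 ψ))
    (S : (n : ℕ) → Matrix (Fin (p n)) (Fin (p n)) ℝ) (θs : (n : ℕ) → Fin (p n) → ℝ)
    (cc CC : ℝ) (hcc : 0 < cc) (hSsymm : ∀ n, (S n).IsSymm)
    (hSlow : ∀ n (a : Fin (p n) → ℝ), cc * ∑ j, a j ^ 2 ≤ ∑ i, ∑ j, a i * S n i j * a j)
    (hSup : ∀ n (a : Fin (p n) → ℝ), ∑ i, ∑ j, a i * S n i j * a j ≤ CC * ∑ j, a j ^ 2)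
    (ρn : ℕ → ℝ) (hρn : ∀ n, ρn n = √(∑ i, ∑ j, θs n i * S n i j * θs n j))
    (hρnpos : ∀ n, 0 < ρn n) (ρ : ℝ) (hρlim : Tendsto ρn atTop (𝓝 ρ))
    (ν : (n : ℕ) → Measure (Fin (p n) → ℝ)) (hνprob : ∀ n, IsProbabilityMeasure (ν n))
    (hνgauss : ∀ n, IsCGauss (ν n) (S n)) :
    (psiStar0 (fun x => f (ρ * x)) < ψ →
      ∃ κbar : ℝ, 0 < κbar ∧
        Tendsto (fun n => dataLaw n (p n) f (θs n) (ν n)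
            {q | κbar ≤ margin n (p n) q.1 q.2}) atTop (𝓝 1))
    ∧ (ψ ≤ psiStar0 (fun x => f (ρ * x)) →
      ∀ κbar : ℝ, 0 < κbar →
        Tendsto (fun n => dataLaw n (p n) f (θs n) (ν n)
            {q | κbar ≤ margin n (p n) q.1 q.2}) atTop (𝓝 0)) := by
  have hl2 {n : ℕ} (w : Fin (p n) → ℝ) : ∑ j, w j ^ 2 = l2 w ^ 2 := by
    rw [l2_sq]
    simp only [dotProduct, sq]
  obtain rfl : ρn = fun n => √(∑ i, ∑ j, θs n i * S n i j * θs n j) := funext hρn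
  simp only [sum_sum_mul_mul_eq_dotProduct, hl2] at hSlow hSup hρnpos hρlim
  have hS (n : ℕ) : (S n).PosSemidef := .of_dotProduct_mulVec_nonneg
    (hSsymm n) fun w => (by positivity : 0 ≤ cc * l2 w ^ 2).trans (hSlow n w)
  choose A u hA hAsq hsqA using fun n => exists_isSpikeFactor (hS n) (hρnpos n)
  refine ⟨exists_tendsto_le_margin_one hf hf01 hρlim hp hA hνgauss hcc fun n w => ?_,
    fun hψ κ => tendsto_le_margin_zero (C := CC) hf hf01 hρlim hp hA hνgauss (fun n w => ?_) hψ⟩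
  · exact (hSlow n w).trans_eq (hAsq n w).symm
  · exact (hsqA n w).trans_le (hSup n w)

/-- The data are linearly separable with a margin which is bounded away from `0`
(with probability tending to one) if and only if `ψ > ψ*(0)`. -/
theorem statement_13
    (f : ℝ → ℝ) (hf : Continuous f) (hf01 : ∀ x, f x ∈ Set.Icc (0:ℝ) 1)
    (ψ : ℝ) (hψ : 0 < ψ)
    (p : ℕ → ℕ) (hp : Tendsto (fun n => (p n : ℝ) / (n : ℝ)) atTop (nhds ψ))
    (S : (n : ℕ) → Matrix (Fin (p n)) (Fin (p n)) ℝ)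
    (θs : (n : ℕ) → Fin (p n) → ℝ)
    -- (A1): uniformly bounded spectrum
    (cc CC : ℝ) (hcc : 0 < cc) (hccCC : cc ≤ CC)
    (hSsymm : ∀ n, (S n).IsSymm)
    (hSlow : ∀ n (a : Fin (p n) → ℝ), cc * ∑ j, a j ^ 2 ≤ ∑ i, ∑ j, a i * S n i j * a j)
    (hSup : ∀ n (a : Fin (p n) → ℝ), ∑ i, ∑ j, a i * S n i j * a j ≤ CC * ∑ j, a j ^ 2)
    -- (A2): spectral decomposition and convergence of the empirical spectral data
    (lam : (n : ℕ) → Fin (p n) → ℝ) (v : (n : ℕ) → Fin (p n) → Fin (p n) → ℝ)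
    (hortho : ∀ n i k, ∑ j, v n i j * v n k j = (if i = k then (1:ℝ) else 0))
    (hdecomp : ∀ n a b, S n a b = ∑ i, lam n i * v n i a * v n i b)
    (ρn : ℕ → ℝ) (hρn : ∀ n, ρn n = Real.sqrt (∑ i, ∑ j, θs n i * S n i j * θs n j))
    (hρnpos : ∀ n, 0 < ρn n)
    (μ : Measure (ℝ × ℝ)) [IsProbabilityMeasure μ]
    (hμpos : ∀ᵐ q ∂μ, 0 < q.1)
    (hweak : ∀ φ : BoundedContinuousFunction (ℝ × ℝ) ℝ,
      Tendsto (fun n => ∫ q, φ q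
          ∂(empMeas (p n) (fun i => (lam n i,
            Real.sqrt ((p n : ℝ) * lam n i) * (∑ j, v n i j * θs n j) / ρn n))))
        atTop (nhds (∫ q, φ q ∂μ)))
    (hsecond : Tendsto (fun n => ∫ q, q.1 ^ 2 + q.2 ^ 2
          ∂(empMeas (p n) (fun i => (lam n i,
            Real.sqrt ((p n : ℝ) * lam n i) * (∑ j, v n i j * θs n j) / ρn n))))
        atTop (nhds (∫ q, q.1 ^ 2 + q.2 ^ 2 ∂μ)))
    (hμw2 : ∫ q, q.2 ^ 2 ∂μ = 1)
    (ρ : ℝ) (hρ : 0 < ρ) (hρlim : Tendsto ρn atTop (nhds ρ))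
    (hρid : (ρ ^ 2)⁻¹ = ∫ q, q.2 ^ 2 / q.1 ∂μ)
    -- (A3): non-degeneracy
    (hnd : NonDeg (fun x => f (ρ * x)))
    -- the Gaussian feature law
    (ν : (n : ℕ) → Measure (Fin (p n) → ℝ))
    (hνprob : ∀ n, IsProbabilityMeasure (ν n))
    (hνgauss : ∀ n, IsCGauss (ν n) (S n))
    :
    (psiStar0 (fun x => f (ρ * x)) < ψ →
      ∃ κbar : ℝ, 0 < κbar ∧
        Tendsto (fun n => dataLaw n (p n) f (θs n) (ν n)
            {q | κbar ≤ margin n (p n) q.1 q.2}) atTop (nhds 1))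
    ∧ (ψ ≤ psiStar0 (fun x => f (ρ * x)) →
      ∀ κbar : ℝ, 0 < κbar →
        Tendsto (fun n => dataLaw n (p n) f (θs n) (ν n)
            {q | κbar ≤ margin n (p n) q.1 q.2}) atTop (nhds 0)) := by
  exact statement_13_general f hf hf01 ψ p hp S θs cc CC hcc hSsymm hSlow hSup ρn hρn hρnpos ρ
    hρlim ν hνprob hνgauss

end MaxMargin
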